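/- For every sufficiently small δ > 0, as h → 0 with ε = ε(h) → 0 and ε(h)/√h → ∞, one has E( X_h²·1_{|X_h| ≤ ε} ) − E( X̃_h²·1_{|X̃_h| ≤ ε} ) = O(h³·ε^{−Y−2}) + O(h^{3/2}·ε^{1−Y/2}) + O(h²·ε^{2−2Y}) + O(h^{1−δ}·ε^{3−Y+δY}) + O(√h·ε·e^{−ε²/(2σ²h)}) + O(√h·ε^{3−Y}·e^{−ε²/(8σ²h)}) (a sum of functions, each big-O of the indicated rate). -/

import Mathlib

open MeasureTheory ProbabilityTheory Filter Asymptotics Set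
open scoped Topology NNReal ENNReal Real

noncomputable section

set_option linter.all false
/-- The Lévy density `s(x) = (C₊·1_{x>0} + C₋·1_{x<0})·q(x)·|x|^{−1−Y}`. -/
def levyDensity (Y Cp Cm : ℝ) (q : ℝ → ℝ) (x : ℝ) : ℝ :=
  (if 0 < x then Cp else if x < 0 then Cm else 0) * q x * |x| ^ (-1 - Y)

/-- The Lévy measure `ν(dx) = s(x) dx`. -/
def levyMeasure (Y Cp Cm : ℝ) (q : ℝ → ℝ) : Measure ℝ :=
  volume.withDensity fun x => ENNReal.ofReal (levyDensity Y Cp Cm q x)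

/-- The Lévy exponent `ψ_J(u) = ibu + ∫ (e^{iux} − 1 − iux·1_{|x|≤1}) ν(dx)`. -/
def psiJ (b Y Cp Cm : ℝ) (q : ℝ → ℝ) (u : ℝ) : ℂ :=
  Complex.I * b * u +
    ∫ x : ℝ,
      (Complex.exp (Complex.I * u * x) - 1 - (if |x| ≤ 1 then Complex.I * u * x else 0))
      ∂(levyMeasure Y Cp Cm q)

/-- The scale parameter `ς = ((C₊+C₋)Γ(−Y)|cos(πY/2)|)^{1/Y}`. -/
def varsigma (Y Cp Cm : ℝ) : ℝ :=
  ((Cp + Cm) * Real.Gamma (-Y) * |Real.cos (π * Y / 2)|) ^ (1 / Y)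

/-- The stable part of the Lévy exponent:
`ς^Y |u|^Y (1 − iβ·sgn(u)·tan(πY/2))` with `β = (C₊−C₋)/(C₊+C₋)`. -/
def stablePart (Y Cp Cm : ℝ) (u : ℝ) : ℂ :=
  (varsigma Y Cp Cm ^ Y * |u| ^ Y : ℝ) *
    (1 - Complex.I * ((Cp - Cm) / (Cp + Cm)) * Real.sign u * Real.tan (π * Y / 2))

/-- Characteristic function of `X̃_h`, the time-`h` marginal of a Brownian motion with
variance `σ²` plus an independent strictly `Y`-stable process. -/
def tildeCF (σ Y Cp Cm : ℝ) (h u : ℝ) : ℂ :=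
  Complex.exp (-(σ ^ 2 * u ^ 2 * h / 2) - h * stablePart Y Cp Cm u)



/-- bound for `exp z - 1` on the left half plane -/
lemma aux_exp1 (z : ℂ) (hz : z.re ≤ 0) : ‖Complex.exp z - 1‖ ≤ 2 * min ‖z‖ 1 := by
  have h2 : ‖Complex.exp z - 1‖ ≤ 2 := by
    calc ‖Complex.exp z - 1‖ ≤ ‖Complex.exp z‖ + ‖(1:ℂ)‖ := norm_sub_le _ _
      _ ≤ 1 + 1 := by
        gcongr
        · rw [Complex.norm_exp]; exact Real.exp_le_one_iff.mpr hz
        · simp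
      _ = 2 := by norm_num
  rcases le_total ‖z‖ 1 with h | h
  · rw [min_eq_left h]; exact Complex.norm_exp_sub_one_le h
  · rw [min_eq_right h]; linarith

lemma aux_exp2 (z : ℂ) (hz : z.re ≤ 0) : ‖Complex.exp z - 1 - z‖ ≤ 3 * (‖z‖ * min ‖z‖ 1) := by
  rcases le_total ‖z‖ 1 with h | h
  · rw [min_eq_left h]
    have := Complex.norm_exp_sub_one_sub_id_le h
    nlinarith [norm_nonneg z, sq_nonneg ‖z‖]
  · rw [min_eq_right h]
    have h1 := aux_exp1 z hz
    rw [min_eq_right h] at h1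
    have := norm_sub_le (Complex.exp z - 1) z
    linarith

lemma aux_min_scale {R x : ℝ} (hx : 0 ≤ x) :
    min (R * x) 1 ≤ max R 1 * min x 1 := by
  rcases le_total x 1 with h | h
  · rw [min_eq_left h]
    exact (min_le_left _ _).trans (mul_le_mul_of_nonneg_right (le_max_left _ _) hx)
  · rw [min_eq_right h, mul_one]
    exact (min_le_right _ _).trans (le_max_right _ _)

lemma aux_w_int {Y : ℝ} (hY1 : 1 < Y) (hY2 : Y < 2) :
    IntegrableOn (fun x : ℝ => min x 1 * x ^ (-Y)) (Ioi 0) := by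
  rw [← Ioc_union_Ioi_eq_Ioi (zero_le_one' ℝ)]
  refine IntegrableOn.union ?_ ?_
  · have : IntegrableOn (fun x : ℝ => x ^ (1 - Y)) (Ioc 0 1) := by
      rw [← intervalIntegrable_iff_integrableOn_Ioc_of_le zero_le_one]
      exact intervalIntegral.intervalIntegrable_rpow' (by linarith)
    refine this.congr_fun (fun x hx => ?_) measurableSet_Ioc
    simp only
    rw [min_eq_left hx.2, sub_eq_add_neg, Real.rpow_add hx.1, Real.rpow_one]
  · have : IntegrableOn (fun x : ℝ => x ^ (-Y)) (Ioi 1) :=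
      integrableOn_Ioi_rpow_of_lt (by linarith) one_pos
    refine this.congr_fun (fun x hx => ?_) measurableSet_Ioi
    simp only
    rw [min_eq_right (le_of_lt hx), one_mul]

lemma aux_w_eq {Y x : ℝ} (hx : 0 < x) : x * min x 1 * x ^ (-1 - Y) = min x 1 * x ^ (-Y) := by
  rw [show (-Y : ℝ) = 1 + (-1 - Y) by ring, Real.rpow_add hx, Real.rpow_one]; ring

/-- the complex Laplace-type integrand -/
def lapI (Y : ℝ) (r : ℂ) (x : ℝ) : ℂ := (Complex.exp (-(r * x)) - 1 + r * x) * ((x ^ (-1 - Y) : ℝ) : ℂ)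

lemma lapI_meas (Y : ℝ) (r : ℂ) : Measurable (lapI Y r) := by
  unfold lapI
  fun_prop

lemma lapI_bound {Y : ℝ} {r : ℂ} (hr : 0 ≤ r.re) {x : ℝ} (hx : 0 < x) :
    ‖lapI Y r x‖ ≤ (3 * ‖r‖ * max ‖r‖ 1) * (min x 1 * x ^ (-Y)) := by
  unfold lapI
  have hz : (-(r * x)).re ≤ 0 := by simp; positivity
  have h := aux_exp2 (-(r * x)) hz
  rw [sub_neg_eq_add, norm_neg, norm_mul, Complex.norm_real, Real.norm_of_nonneg hx.le] at h
  rw [norm_mul, Complex.norm_real, Real.norm_of_nonneg (by positivity), ← aux_w_eq hx]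
  calc _ ≤ 3 * (‖r‖ * x * min (‖r‖ * x) 1) * x ^ (-1 - Y) := by gcongr
    _ ≤ 3 * (‖r‖ * x * (max ‖r‖ 1 * min x 1)) * x ^ (-1 - Y) := by
      gcongr; exact aux_min_scale hx.le
    _ = _ := by ring

lemma lapI_int {Y : ℝ} (hY1 : 1 < Y) (hY2 : Y < 2) {r : ℂ} (hr : 0 ≤ r.re) :
    IntegrableOn (lapI Y r) (Ioi 0) := by
  refine Integrable.mono' ((aux_w_int hY1 hY2).const_mul (3 * ‖r‖ * max ‖r‖ 1)) (lapI_meas Y r).aestronglyMeasurable ?_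
  exact (ae_restrict_iff' measurableSet_Ioi).mpr (ae_of_all _ fun x hx => lapI_bound hr hx)

/-- `∫₀^∞ (e^{-x}-1+x) x^{-1-Y} dx = Γ(-Y)` -/
lemma real_gamma_neg {Y : ℝ} (hY1 : 1 < Y) (hY2 : Y < 2) :
    ∫ x in Ioi (0:ℝ), (Real.exp (-x) - 1 + x) * x ^ (-1 - Y) = Real.Gamma (-Y) := by
  -- first integration by parts
  have hb : ∀ x : ℝ, 0 < x → |Real.exp (-x) - 1| ≤ 2 * min x 1 := by
    intro x hx
    have := aux_exp1 (-(x:ℂ)) (by simp [hx.le])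
    rw [norm_neg, Complex.norm_real, Real.norm_of_nonneg hx.le] at this
    rw [← Real.norm_eq_abs, ← Complex.norm_real]; push_cast; exact this
  have hb2 : ∀ x : ℝ, 0 < x → |Real.exp (-x) - 1 + x| ≤ 3 * (x * min x 1) := by
    intro x hx
    have := aux_exp2 (-(x:ℂ)) (by simp [hx.le])
    rw [sub_neg_eq_add, norm_neg, Complex.norm_real, Real.norm_of_nonneg hx.le] at this
    rw [← Real.norm_eq_abs, ← Complex.norm_real]; push_cast; exact this
  have hmeas1 : Measurable (fun x : ℝ => (1 - Real.exp (-x)) * x ^ (-Y)) := by fun_prop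
  have hmeas2 : Measurable (fun x : ℝ => (Real.exp (-x) - 1 + x) * x ^ (-1 - Y)) := by fun_prop
  have hi1 : IntegrableOn (fun x : ℝ => (1 - Real.exp (-x)) * x ^ (-Y)) (Ioi 0) := by
    refine Integrable.mono' ((aux_w_int hY1 hY2).const_mul 2) hmeas1.aestronglyMeasurable ?_
    refine (ae_restrict_iff' measurableSet_Ioi).mpr (ae_of_all _ fun x hx => ?_)
    have hx : 0 < x := hx
    rw [norm_mul, Real.norm_of_nonneg (r := x ^ (-Y)) (by positivity), Real.norm_eq_abs, abs_sub_comm, ← mul_assoc]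
    gcongr
    exact hb x hx
  have hi2 : IntegrableOn (fun x : ℝ => (Real.exp (-x) - 1 + x) * x ^ (-1 - Y)) (Ioi 0) := by
    refine Integrable.mono' ((aux_w_int hY1 hY2).const_mul 3) hmeas2.aestronglyMeasurable ?_
    refine (ae_restrict_iff' measurableSet_Ioi).mpr (ae_of_all _ fun x hx => ?_)
    have hx : 0 < x := hx
    rw [norm_mul, Real.norm_of_nonneg (r := x ^ (-1-Y)) (by positivity), Real.norm_eq_abs, ← aux_w_eq hx, ← mul_assoc]
    gcongr
    exact hb2 x hx
  have hi3 : IntegrableOn (fun x : ℝ => Real.exp (-x) * x ^ (1 - Y)) (Ioi 0) := by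
    have := Real.GammaIntegral_convergent (s := 2 - Y) (by linarith)
    rwa [show (2 - Y - 1 : ℝ) = 1 - Y by ring] at this
  have hmin0 : Tendsto (fun x : ℝ => x ^ (2 - Y)) (𝓝[>] 0) (𝓝 0) := by
    have : Tendsto (fun x : ℝ => x ^ (2 - Y)) (𝓝 0) (𝓝 ((0:ℝ) ^ (2 - Y))) :=
      (Real.continuousAt_rpow_const 0 (2 - Y) (Or.inr (by linarith))).tendsto
    rw [Real.zero_rpow (by linarith)] at this
    exact this.mono_left nhdsWithin_le_nhds
  have hmininf : Tendsto (fun x : ℝ => x ^ (1 - Y)) atTop (𝓝 0) := by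
    have := tendsto_rpow_neg_atTop (y := Y - 1) (by linarith)
    simpa using this
  have A : ∫ x in Ioi (0:ℝ), (Real.exp (-x) - 1 + x) * x ^ (-1 - Y)
      = Y⁻¹ * ∫ x in Ioi (0:ℝ), (1 - Real.exp (-x)) * x ^ (-Y) := by
    have := integral_Ioi_mul_deriv_eq_deriv_mul (a := 0) (a' := 0) (b' := 0)
      (u := fun x : ℝ => Real.exp (-x) - 1 + x) (v := fun x : ℝ => -(Y⁻¹) * x ^ (-Y))
      (u' := fun x : ℝ => 1 - Real.exp (-x)) (v' := fun x : ℝ => x ^ (-1 - Y)) ?_ ?_ hi2 ?_ ?_ ?_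
    · rw [this]
      simp only [sub_zero, zero_sub, ← integral_neg, ← integral_const_mul]
      congr 1; ext x; ring
    · intro x hx
      have h1 : HasDerivAt (fun x : ℝ => Real.exp (-x)) (Real.exp (-x) * (-1)) x :=
        (hasDerivAt_neg x).exp
      convert! (h1.sub_const 1).add (hasDerivAt_id x) using 1; ring
    · intro x hx
      have hx : 0 < x := hx
      have h1 := (Real.hasDerivAt_rpow_const (x := x) (p := -Y) (Or.inl hx.ne')).const_mul (-(Y⁻¹))
      convert! h1 using 1
      rw [show (-Y - 1 : ℝ) = -1 - Y by ring]
      field_simp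
    · refine IntegrableOn.congr_fun (hi1.const_mul (-(Y⁻¹))) (fun x _ => ?_) measurableSet_Ioi
      simp only [Pi.mul_apply]; ring
    · refine squeeze_zero_norm' (a := fun x => 3 * Y⁻¹ * x ^ (2 - Y)) ?_ (by simpa using hmin0.const_mul (3 * Y⁻¹))
      filter_upwards [self_mem_nhdsWithin] with x hx
      have hx : 0 < x := hx
      simp only [Pi.mul_apply]
      rw [norm_mul, norm_mul, norm_neg, Real.norm_of_nonneg (r := x ^ (-Y)) (by positivity), Real.norm_of_nonneg (r := Y⁻¹) (by positivity), Real.norm_eq_abs, show (2 - Y : ℝ) = 1 + 1 + -Y by ring, Real.rpow_add hx, Real.rpow_add hx, Real.rpow_one]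
      have := (hb2 x hx).trans (mul_le_mul_of_nonneg_left (mul_le_mul_of_nonneg_left (min_le_left x 1) hx.le) (by norm_num : (0:ℝ) ≤ 3))
      calc _ ≤ 3 * (x * x) * (Y⁻¹ * x ^ (-Y)) := by gcongr
        _ = _ := by ring
    · refine squeeze_zero_norm' (a := fun x => 3 * Y⁻¹ * x ^ (1 - Y)) ?_ (by simpa using hmininf.const_mul (3 * Y⁻¹))
      filter_upwards [eventually_gt_atTop 0] with x hx
      simp only [Pi.mul_apply]
      rw [norm_mul, norm_mul, norm_neg, Real.norm_of_nonneg (r := x ^ (-Y)) (by positivity), Real.norm_of_nonneg (r := Y⁻¹) (by positivity), Real.norm_eq_abs, show (1 - Y : ℝ) = 1 + -Y by ring, Real.rpow_add hx, Real.rpow_one]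
      have := (hb2 x hx).trans (mul_le_mul_of_nonneg_left (mul_le_mul_of_nonneg_left (min_le_right x 1) hx.le) (by norm_num : (0:ℝ) ≤ 3))
      calc _ ≤ 3 * (x * 1) * (Y⁻¹ * x ^ (-Y)) := by gcongr
        _ = _ := by ring
  have B : ∫ x in Ioi (0:ℝ), (1 - Real.exp (-x)) * x ^ (-Y)
      = (Y - 1)⁻¹ * ∫ x in Ioi (0:ℝ), Real.exp (-x) * x ^ (1 - Y) := by
    have hY3 : 0 < Y - 1 := by linarith
    have := integral_Ioi_mul_deriv_eq_deriv_mul (a := 0) (a' := 0) (b' := 0)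
      (u := fun x : ℝ => 1 - Real.exp (-x)) (v := fun x : ℝ => -((Y-1)⁻¹) * x ^ (1-Y))
      (u' := fun x : ℝ => Real.exp (-x)) (v' := fun x : ℝ => x ^ (-Y)) ?_ ?_ hi1 ?_ ?_ ?_
    · rw [this]
      simp only [sub_zero, zero_sub, ← integral_neg, ← integral_const_mul]
      congr 1; ext x; ring
    · intro x hx
      have h1 : HasDerivAt (fun x : ℝ => Real.exp (-x)) (Real.exp (-x) * (-1)) x :=
        (hasDerivAt_neg x).exp
      convert! h1.const_sub 1 using 1; ring
    · intro x hx
      have hx : 0 < x := hx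
      have h1 := (Real.hasDerivAt_rpow_const (x := x) (p := 1-Y) (Or.inl hx.ne')).const_mul (-((Y-1)⁻¹))
      convert! h1 using 1
      rw [show (1 - Y - 1 : ℝ) = -Y by ring]
      field_simp
      ring
    · refine IntegrableOn.congr_fun (hi3.const_mul (-((Y-1)⁻¹))) (fun x _ => ?_) measurableSet_Ioi
      simp only [Pi.mul_apply]; ring
    · refine squeeze_zero_norm' (a := fun x => 2 * (Y-1)⁻¹ * x ^ (2 - Y)) ?_ (by simpa using hmin0.const_mul (2 * (Y-1)⁻¹))
      filter_upwards [self_mem_nhdsWithin] with x hx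
      have hx : 0 < x := hx
      simp only [Pi.mul_apply]
      rw [norm_mul, norm_mul, norm_neg, Real.norm_of_nonneg (r := x ^ (1-Y)) (by positivity), Real.norm_of_nonneg (r := (Y-1)⁻¹) (by positivity), Real.norm_eq_abs, show (2 - Y : ℝ) = 1 + (1 + -Y) by ring, Real.rpow_add hx, Real.rpow_one, ← sub_eq_add_neg, abs_sub_comm]
      have := (hb x hx).trans (mul_le_mul_of_nonneg_left (min_le_left x 1) (by norm_num : (0:ℝ) ≤ 2))
      calc _ ≤ 2 * x * ((Y-1)⁻¹ * x ^ (1-Y)) := by gcongr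
        _ = _ := by ring
    · refine squeeze_zero_norm' (a := fun x => 2 * (Y-1)⁻¹ * x ^ (1 - Y)) ?_ (by simpa using hmininf.const_mul (2 * (Y-1)⁻¹))
      filter_upwards [eventually_gt_atTop 0] with x hx
      simp only [Pi.mul_apply]
      rw [norm_mul, norm_mul, norm_neg, Real.norm_of_nonneg (r := x ^ (1-Y)) (by positivity), Real.norm_of_nonneg (r := (Y-1)⁻¹) (by positivity), Real.norm_eq_abs, abs_sub_comm]
      have := (hb x hx).trans (mul_le_mul_of_nonneg_left (min_le_right x 1) (by norm_num : (0:ℝ) ≤ 2))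
      calc _ ≤ 2 * 1 * ((Y-1)⁻¹ * x ^ (1-Y)) := by gcongr
        _ = _ := by ring
  have C : ∫ x in Ioi (0:ℝ), Real.exp (-x) * x ^ (1 - Y) = Real.Gamma (2 - Y) := by
    rw [Real.Gamma_eq_integral (by linarith), show (2 - Y - 1 : ℝ) = 1 - Y by ring]
  rw [A, B, C, show (2 - Y : ℝ) = (1 - Y) + 1 by ring, Real.Gamma_add_one (by linarith),
    show (1 - Y : ℝ) = -Y + 1 by ring, Real.Gamma_add_one (by linarith)]
  have : Y - 1 ≠ 0 := by linarith
  have : Y ≠ 0 := by linarith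
  field_simp
  ring

lemma lap_real {Y : ℝ} (hY1 : 1 < Y) (hY2 : Y < 2) {r : ℝ} (hr : 0 < r) :
    ∫ x in Ioi (0:ℝ), lapI Y r x = (r : ℂ) ^ (Y : ℂ) * (Real.Gamma (-Y) : ℂ) := by
  have h1 : ∀ x ∈ Ioi (0:ℝ), lapI Y r x =
      ((r ^ (1 + Y) * ((Real.exp (-(r * x)) - 1 + r * x) * (r * x) ^ (-1 - Y)) : ℝ) : ℂ) := by
    intro x hx
    have hx : 0 < x := hx
    unfold lapI
    rw [Real.mul_rpow hr.le hx.le]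
    have : r ^ (1 + Y) * r ^ (-1 - Y) = 1 := by
      rw [← Real.rpow_add hr]; simp
    have h2 : r ^ (1 + Y) * ((Real.exp (-(r * x)) - 1 + r * x) * (r ^ (-1 - Y) * x ^ (-1 - Y)))
      = (Real.exp (-(r * x)) - 1 + r * x) * x ^ (-1 - Y) := by
      linear_combination ((Real.exp (-(r * x)) - 1 + r * x) * x ^ (-1 - Y)) * this
    rw [h2]; push_cast; rfl
  rw [setIntegral_congr_fun measurableSet_Ioi h1, integral_complex_ofReal, integral_const_mul,
    integral_comp_mul_left_Ioi (fun x => (Real.exp (-x) - 1 + x) * x ^ (-1 - Y)) 0 hr, mul_zero,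
    real_gamma_neg hY1 hY2, ← Complex.ofReal_cpow hr.le, ← Complex.ofReal_mul]
  congr 1
  rw [Real.rpow_add hr, Real.rpow_one, smul_eq_mul]
  field_simp

lemma lap_hasDeriv {Y : ℝ} (hY1 : 1 < Y) (hY2 : Y < 2) {r : ℂ} (hr : 0 < r.re) :
    DifferentiableAt ℂ (fun r : ℂ => ∫ x in Ioi (0:ℝ), lapI Y r x) r := by
  have hopen : IsOpen {z : ℂ | 0 < z.re} := isOpen_lt continuous_const Complex.continuous_re
  have hs : {z : ℂ | 0 < z.re} ∩ Metric.ball r 1 ∈ 𝓝 r :=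
    inter_mem (hopen.mem_nhds hr) (Metric.ball_mem_nhds r one_pos)
  have := hasDerivAt_integral_of_dominated_loc_of_deriv_le
    (μ := volume.restrict (Ioi (0:ℝ))) (F := fun r x => lapI Y r x)
    (F' := fun (r : ℂ) (x : ℝ) => (Complex.exp (-(r * x)) * (-x) + x) * ((x ^ (-1 - Y) : ℝ) : ℂ))
    (bound := fun x => (2 * max (‖r‖ + 1) 1) * (min x 1 * x ^ (-Y)))
    (x₀ := r) hs ?_ (lapI_int hY1 hY2 hr.le) ?_ ?_ ?_ ?_
  · exact this.2.differentiableAt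
  · exact Eventually.of_forall fun z => (lapI_meas Y z).aestronglyMeasurable
  · apply Measurable.aestronglyMeasurable; fun_prop
  · refine (ae_restrict_iff' measurableSet_Ioi).mpr (ae_of_all _ fun x hx z hz => ?_)
    have hx : 0 < x := hx
    have hz1 : 0 < z.re := hz.1
    have hz2 : ‖z‖ ≤ ‖r‖ + 1 := by
      have : ‖z - r‖ < 1 := by simpa [dist_eq_norm] using hz.2
      have h3 : ‖z‖ ≤ ‖r‖ + ‖z - r‖ := by
        have := norm_add_le r (z - r); simpa using this
      linarith
    have h := aux_exp1 (-(z * x)) (by simp; positivity)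
    rw [norm_neg, norm_mul, Complex.norm_real, Real.norm_of_nonneg hx.le] at h
    rw [show Complex.exp (-(z * x)) * (-(x:ℂ)) + x = -(x * (Complex.exp (-(z * x)) - 1)) by ring,
      norm_mul, norm_neg, norm_mul, Complex.norm_real, Complex.norm_real, Real.norm_of_nonneg hx.le,
      Real.norm_of_nonneg (by positivity), ← aux_w_eq hx]
    calc _ ≤ x * (2 * min (‖z‖ * x) 1) * x ^ (-1 - Y) := by gcongr
      _ ≤ x * (2 * (max (‖r‖ + 1) 1 * min x 1)) * x ^ (-1 - Y) := by
        gcongr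
        refine le_trans ?_ (aux_min_scale hx.le)
        gcongr
      _ = _ := by ring
  · exact (aux_w_int hY1 hY2).const_mul _
  · refine ae_of_all _ fun x z _ => ?_
    unfold lapI
    refine HasDerivAt.mul_const ?_ _
    have h1 : HasDerivAt (fun z : ℂ => z * (x:ℂ)) (x:ℂ) z := by
      simpa using (hasDerivAt_id z).mul_const (x:ℂ)
    exact (h1.neg.cexp.sub_const 1).add h1

lemma lap_half {Y : ℝ} (hY1 : 1 < Y) (hY2 : Y < 2) {r : ℂ} (hr : 0 < r.re) :
    ∫ x in Ioi (0:ℝ), lapI Y r x = r ^ (Y : ℂ) * (Real.Gamma (-Y) : ℂ) := by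
  have hopen : IsOpen {z : ℂ | 0 < z.re} := isOpen_lt continuous_const Complex.continuous_re
  have hf : AnalyticOnNhd ℂ (fun r : ℂ => ∫ x in Ioi (0:ℝ), lapI Y r x) {z : ℂ | 0 < z.re} :=
    DifferentiableOn.analyticOnNhd
      (fun z hz => (lap_hasDeriv hY1 hY2 hz).differentiableWithinAt) hopen
  have hg : AnalyticOnNhd ℂ (fun r : ℂ => r ^ (Y : ℂ) * (Real.Gamma (-Y) : ℂ)) {z : ℂ | 0 < z.re} := by
    refine DifferentiableOn.analyticOnNhd (fun z hz => ?_) hopen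
    refine DifferentiableAt.differentiableWithinAt ?_
    refine DifferentiableAt.mul_const ?_ _
    exact differentiableAt_id.cpow_const (Or.inl hz)
  have := hf.eqOn_of_preconnected_of_frequently_eq hg (z₀ := 1)
    (convex_halfSpace_re_gt 0).isPreconnected (by simp) ?_
  · exact this hr
  · have ht : Tendsto (fun n : ℕ => ((1 + 1 / ((n:ℝ) + 1) : ℝ) : ℂ)) atTop (𝓝[≠] 1) := by
      refine tendsto_nhdsWithin_iff.mpr ⟨?_, Eventually.of_forall fun n => ?_⟩
      · have h1 : Tendsto (fun n : ℕ => (1 + 1 / ((n:ℝ) + 1) : ℝ)) atTop (𝓝 (1 + 0)) :=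
          tendsto_const_nhds.add tendsto_one_div_add_atTop_nhds_zero_nat
        have := (Complex.continuous_ofReal.tendsto (1 + 0)).comp h1
        simpa [Function.comp_def] using this
      · simp only [mem_compl_iff, mem_singleton_iff]
        intro h
        have : (1 + 1 / ((n:ℝ) + 1) : ℝ) = 1 := by exact_mod_cast h
        have h2 : 0 < 1 / ((n:ℝ) + 1) := by positivity
        linarith
    refine ht.frequently (Eventually.frequently (Eventually.of_forall fun n => ?_))
    exact lap_real hY1 hY2 (by positivity)

lemma lap_imag {Y : ℝ} (hY1 : 1 < Y) (hY2 : Y < 2) {u : ℝ} (hu : u ≠ 0) :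
    ∫ x in Ioi (0:ℝ), lapI Y (Complex.I * u) x = (Complex.I * u) ^ (Y : ℂ) * (Real.Gamma (-Y) : ℂ) := by
  have ht : Tendsto (fun n : ℕ => ((1 / ((n:ℝ) + 1) : ℝ) : ℂ) + Complex.I * u) atTop (𝓝 (Complex.I * u)) := by
    have := (Complex.continuous_ofReal.tendsto 0).comp (tendsto_one_div_add_atTop_nhds_zero_nat (𝕜 := ℝ))
    have := this.add_const (Complex.I * u)
    simpa using this
  have hn : ∀ n : ℕ, 0 < (((1 / ((n:ℝ) + 1) : ℝ) : ℂ) + Complex.I * u).re := by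
    intro n
    simp only [Complex.add_re, Complex.ofReal_re, Complex.mul_re, Complex.I_re, Complex.I_im, Complex.ofReal_im]
    have : 0 < 1 / ((n:ℝ) + 1) := by positivity
    linarith
  have hn2 : ∀ n : ℕ, ‖((1 / ((n:ℝ) + 1) : ℝ) : ℂ) + Complex.I * u‖ ≤ 1 + |u| := by
    intro n
    refine (norm_add_le _ _).trans ?_
    gcongr
    · rw [Complex.norm_real, Real.norm_of_nonneg (by positivity), div_le_one (by positivity)]
      have : (0:ℝ) ≤ n := Nat.cast_nonneg n
      linarith
    · simp
  have h1 : Tendsto (fun n : ℕ => ∫ x in Ioi (0:ℝ), lapI Y (((1 / ((n:ℝ) + 1) : ℝ) : ℂ) + Complex.I * u) x) atTop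
      (𝓝 (∫ x in Ioi (0:ℝ), lapI Y (Complex.I * u) x)) := by
    refine tendsto_integral_filter_of_dominated_convergence
      (fun x => (3 * (1 + |u|) * max (1 + |u|) 1) * (min x 1 * x ^ (-Y))) ?_ ?_ ?_ ?_
    · exact Eventually.of_forall fun z => (lapI_meas Y _).aestronglyMeasurable
    · refine Eventually.of_forall fun n => (ae_restrict_iff' measurableSet_Ioi).mpr (ae_of_all _ fun x hx => ?_)
      refine (lapI_bound (hn n).le hx).trans ?_
      have hx : 0 < x := hx
      have := hn2 n
      gcongr
    · exact (aux_w_int hY1 hY2).const_mul _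
    · refine ae_of_all _ fun x => ?_
      have : Continuous (fun r : ℂ => lapI Y r x) := by unfold lapI; fun_prop
      exact (this.tendsto _).comp ht
  have h2 : Tendsto (fun n : ℕ => (((1 / ((n:ℝ) + 1) : ℝ) : ℂ) + Complex.I * u) ^ (Y:ℂ) * (Real.Gamma (-Y) : ℂ)) atTop
      (𝓝 ((Complex.I * u) ^ (Y : ℂ) * (Real.Gamma (-Y) : ℂ))) := by
    refine Tendsto.mul_const _ ?_
    refine (continuousAt_cpow_const ?_).tendsto.comp ht
    right; simpa using hu
  refine tendsto_nhds_unique h1 ?_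
  convert! h2 using 2 with n
  exact lap_half hY1 hY2 (hn n)

lemma integrable_of_abs {f : ℝ → ℝ} (hf : IntegrableOn f (Ioi 0)) : Integrable (fun x => f |x|) := by
  have h1 : IntegrableOn (fun x => f |x|) (Ioi 0) := by
    refine IntegrableOn.congr_fun hf (fun x hx => ?_) measurableSet_Ioi
    rw [abs_of_pos hx]
  have h2 : IntegrableOn (fun x ↦ f |x|) (Iic 0) := by
    rw [← Measure.map_neg_eq_self (volume : Measure ℝ)]
    let m : MeasurableEmbedding fun x : ℝ => -x := (Homeomorph.neg ℝ).measurableEmbedding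
    rw [m.integrableOn_map_iff]
    simp_rw [Function.comp_def, abs_neg, neg_preimage, neg_Iic, neg_zero]
    exact Iff.mpr integrableOn_Ici_iff_integrableOn_Ioi h1
  rw [← integrableOn_univ, ← Iic_union_Ioi (a := (0:ℝ))]
  exact h2.union h1

/-- compensated exponential kernel -/
def kern (u x : ℝ) : ℂ := Complex.exp (Complex.I * u * x) - 1 - Complex.I * u * x

lemma kern_scale (u x : ℝ) : kern u x = kern 1 (u * x) := by
  unfold kern; push_cast; ring_nf

lemma kern_meas (u : ℝ) : Measurable (kern u) := by unfold kern; fun_prop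

lemma kern_bound (u x : ℝ) :
    ‖kern u x‖ ≤ (3 * |u| * max |u| 1) * (|x| * min |x| 1) := by
  have h := aux_exp2 (Complex.I * u * x) (by simp)
  rw [norm_mul, norm_mul, Complex.norm_I, one_mul, Complex.norm_real, Complex.norm_real,
    Real.norm_eq_abs, Real.norm_eq_abs] at h
  refine h.trans ?_
  have := aux_min_scale (R := |u|) (abs_nonneg x)
  calc 3 * (|u| * |x| * min (|u| * |x|) 1) ≤ 3 * (|u| * |x| * (max |u| 1 * min |x| 1)) := by gcongr
    _ = _ := by ring

lemma aux_w_eq_abs {Y : ℝ} (hY1 : 1 < Y) (x : ℝ) :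
    |x| * min |x| 1 * |x| ^ (-1 - Y) = min |x| 1 * |x| ^ (-Y) := by
  rcases eq_or_ne x 0 with rfl | hx
  · simp [Real.zero_rpow (show -Y ≠ 0 by linarith)]
  · exact aux_w_eq (abs_pos.mpr hx)

lemma kern_int {Y : ℝ} (hY1 : 1 < Y) (hY2 : Y < 2) (u : ℝ) :
    Integrable (fun x => ‖kern u x‖ * |x| ^ (-1 - Y)) := by
  refine Integrable.mono' ((integrable_of_abs (aux_w_int hY1 hY2)).const_mul (3 * |u| * max |u| 1))
    ?_ (ae_of_all _ fun x => ?_)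
  · have := kern_meas u
    apply Measurable.aestronglyMeasurable; fun_prop
  · rw [Real.norm_of_nonneg (by positivity), ← aux_w_eq_abs hY1]
    have := kern_bound u x
    calc _ ≤ ((3 * |u| * max |u| 1) * (|x| * min |x| 1)) * |x| ^ (-1 - Y) := by gcongr
      _ = _ := by ring

lemma kern_scale_int {Y : ℝ} (hY1 : 1 < Y) (u : ℝ) :
    ∫ x, ‖kern u x‖ * |x| ^ (-1 - Y) = |u| ^ Y * ∫ x, ‖kern 1 x‖ * |x| ^ (-1 - Y) := by
  rcases eq_or_ne u 0 with rfl | hu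
  · have : Y ≠ 0 := by linarith
    simp [kern, Real.zero_rpow this]
  · have hu' : 0 < |u| := abs_pos.mpr hu
    have h : ∀ x, ‖kern u x‖ * |x| ^ (-1 - Y) = |u| ^ (1 + Y) * (‖kern 1 (u * x)‖ * |u * x| ^ (-1 - Y)) := by
      intro x
      rw [kern_scale u x, abs_mul, Real.mul_rpow (abs_nonneg _) (abs_nonneg _)]
      have : |u| ^ (1 + Y) * |u| ^ (-1 - Y) = 1 := by rw [← Real.rpow_add hu']; simp
      linear_combination -(‖kern 1 (u * x)‖ * |x| ^ (-1 - Y)) * this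
    simp_rw [h]
    rw [integral_const_mul, Measure.integral_comp_mul_left (fun x => ‖kern 1 x‖ * |x| ^ (-1 - Y)),
      smul_eq_mul, ← mul_assoc, abs_inv, Real.rpow_add hu', Real.rpow_one]
    congr 1
    field_simp

lemma kern_dens_int {Y : ℝ} (hY1 : 1 < Y) (hY2 : Y < 2) {d : ℝ → ℝ} (hd : Measurable d) {K : ℝ}
    (hK : ∀ x, |d x| ≤ K * |x| ^ (-1 - Y)) (u : ℝ) :
    Integrable (fun x => kern u x * (d x : ℂ)) := by
  refine Integrable.mono' ((kern_int hY1 hY2 u).const_mul K) ?_ (ae_of_all _ fun x => ?_)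
  · have := kern_meas u
    apply Measurable.aestronglyMeasurable; fun_prop
  · rw [norm_mul, Complex.norm_real, Real.norm_eq_abs]
    calc _ ≤ ‖kern u x‖ * (K * |x| ^ (-1 - Y)) := by gcongr; exact hK x
      _ = _ := by ring

lemma kern_dens_bound {Y : ℝ} (hY1 : 1 < Y) (hY2 : Y < 2) {d : ℝ → ℝ} {K : ℝ}
    (hK : ∀ x, |d x| ≤ K * |x| ^ (-1 - Y)) (u : ℝ) :
    ‖∫ x, kern u x * (d x : ℂ)‖ ≤ (K * ∫ x, ‖kern 1 x‖ * |x| ^ (-1 - Y)) * |u| ^ Y := by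
  have h : ‖∫ x, kern u x * (d x : ℂ)‖ ≤ ∫ x, K * (‖kern u x‖ * |x| ^ (-1 - Y)) := by
    refine norm_integral_le_of_norm_le ((kern_int hY1 hY2 u).const_mul K) (ae_of_all _ fun x => ?_)
    rw [norm_mul, Complex.norm_real, Real.norm_eq_abs]
    calc _ ≤ ‖kern u x‖ * (K * |x| ^ (-1 - Y)) := by gcongr; exact hK x
      _ = _ := by ring
  rw [integral_const_mul, kern_scale_int hY1] at h
  linarith

lemma levyDensity_meas (Y Cp Cm : ℝ) {q : ℝ → ℝ} (hq : Measurable q) :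
    Measurable (levyDensity Y Cp Cm q) := by
  unfold levyDensity
  have : Measurable (fun x : ℝ => if 0 < x then Cp else if x < 0 then Cm else 0) :=
    Measurable.ite (measurableSet_lt measurable_const measurable_id) measurable_const
      (Measurable.ite (measurableSet_lt measurable_id measurable_const) measurable_const measurable_const)
  fun_prop

lemma levyDensity_nonneg {Y Cp Cm : ℝ} (hCp : 0 < Cp) (hCm : 0 < Cm) {q : ℝ → ℝ} (hq : ∀ x, 0 ≤ q x) (x : ℝ) :
    0 ≤ levyDensity Y Cp Cm q x := by
  unfold levyDensity
  have := hq x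
  have h2 : 0 ≤ (if 0 < x then Cp else if x < 0 then Cm else 0) := by split_ifs <;> linarith
  positivity

lemma levyDensity_bound {Y Cp Cm : ℝ} (hCp : 0 < Cp) (hCm : 0 < Cm) {q : ℝ → ℝ} (hq : ∀ x, 0 ≤ q x)
    {M : ℝ} (hM : ∀ x, q x ≤ M) (x : ℝ) :
    |levyDensity Y Cp Cm q x| ≤ ((Cp + Cm) * M) * |x| ^ (-1 - Y) := by
  rw [abs_of_nonneg (levyDensity_nonneg hCp hCm hq x)]
  unfold levyDensity
  have h0 := hq x
  have := hM x
  have h2 : (if 0 < x then Cp else if x < 0 then Cm else 0) ≤ Cp + Cm := by split_ifs <;> linarith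
  gcongr

lemma I_mul_cpow {Y u : ℝ} (hu : u ≠ 0) :
    (Complex.I * u) ^ (Y:ℂ) = ((|u| ^ Y : ℝ) : ℂ) *
      ((Real.cos (π * Y / 2) : ℂ) + Complex.I * (Real.sign u : ℝ) * (Real.sin (π * Y / 2) : ℂ)) := by
  rcases lt_or_gt_of_ne hu with h | h
  · rw [Real.sign_of_neg h, abs_of_neg h, show Complex.I * (u:ℂ) = ((-u : ℝ):ℂ) * (-Complex.I) by push_cast; ring,
      Complex.cpow_def_of_ne_zero (by simp [hu]), Complex.log_ofReal_mul (by linarith) (by simp), Complex.log_neg_I,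
      add_mul, Complex.exp_add, Real.rpow_def_of_pos (by linarith)]
    push_cast
    congr 1
    rw [show -((π:ℂ) / 2) * Complex.I * Y = (-((π:ℂ) * Y / 2)) * Complex.I by ring, Complex.exp_mul_I,
      Complex.cos_neg, Complex.sin_neg]
    ring
  · rw [Real.sign_of_pos h, abs_of_pos h, mul_comm,
      Complex.cpow_def_of_ne_zero (by simp [hu]), Complex.log_ofReal_mul h (by simp), Complex.log_I,
      add_mul, Complex.exp_add, Real.rpow_def_of_pos h]
    push_cast
    congr 1
    rw [show ((π:ℂ) / 2) * Complex.I * Y = (((π:ℂ) * Y / 2)) * Complex.I by ring, Complex.exp_mul_I]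
    ring

lemma gamma_neg_pos {Y : ℝ} (hY1 : 1 < Y) (hY2 : Y < 2) : 0 < Real.Gamma (-Y) := by
  have h := Real.Gamma_pos_of_pos (show 0 < 2 - Y by linarith)
  rw [show (2 - Y : ℝ) = (1 - Y) + 1 by ring, Real.Gamma_add_one (by linarith),
    show (1 - Y : ℝ) = -Y + 1 by ring, Real.Gamma_add_one (by linarith), ← mul_assoc] at h
  have h2 : 0 < (-Y + 1) * -Y := by nlinarith
  exact (pos_iff_pos_of_mul_pos h).mp h2

lemma cos_neg_aux {Y : ℝ} (hY1 : 1 < Y) (hY2 : Y < 2) : Real.cos (π * Y / 2) < 0 := by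
  apply Real.cos_neg_of_pi_div_two_lt_of_lt <;> nlinarith [Real.pi_pos]

lemma varsigma_pow {Y Cp Cm : ℝ} (hY1 : 1 < Y) (hY2 : Y < 2) (hCp : 0 < Cp) (hCm : 0 < Cm) :
    varsigma Y Cp Cm ^ Y = -((Cp + Cm) * Real.Gamma (-Y) * Real.cos (π * Y / 2)) := by
  unfold varsigma
  have h1 := gamma_neg_pos hY1 hY2
  have h2 := cos_neg_aux hY1 hY2
  rw [← Real.rpow_mul (by positivity), one_div, inv_mul_cancel₀ (by linarith), Real.rpow_one, abs_of_neg h2]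
  ring

lemma stable_kern {Y Cp Cm : ℝ} (hY1 : 1 < Y) (hY2 : Y < 2) (hCp : 0 < Cp) (hCm : 0 < Cm) (u : ℝ) :
    ∫ x, kern u x * (levyDensity Y Cp Cm (fun _ => 1) x : ℂ) = - stablePart Y Cp Cm u := by
  have hIntg := kern_dens_int hY1 hY2 (levyDensity_meas Y Cp Cm (q := fun _ => 1) measurable_const)
    (levyDensity_bound hCp hCm (by simp) (M := 1) (by simp)) u
  rcases eq_or_ne u 0 with rfl | hu
  · have : Y ≠ 0 := by linarith
    simp [kern, stablePart, Real.zero_rpow this]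
  rw [← intervalIntegral.integral_Iic_add_Ioi hIntg.integrableOn hIntg.integrableOn (b := 0)]
  have h1 : ∫ x in Ioi (0:ℝ), kern u x * (levyDensity Y Cp Cm (fun _ => 1) x : ℂ)
      = Cp * ((Complex.I * (-u : ℝ)) ^ (Y : ℂ) * (Real.Gamma (-Y) : ℂ)) := by
    rw [← lap_imag hY1 hY2 (neg_ne_zero.mpr hu), ← integral_const_mul]
    refine setIntegral_congr_fun measurableSet_Ioi fun x hx => ?_
    have hx : 0 < x := hx
    simp only [kern, lapI, levyDensity, hx, if_true, abs_of_pos hx]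
    push_cast
    ring_nf
  have h2 : ∫ x in Iic (0:ℝ), kern u x * (levyDensity Y Cp Cm (fun _ => 1) x : ℂ)
      = Cm * ((Complex.I * u) ^ (Y : ℂ) * (Real.Gamma (-Y) : ℂ)) := by
    rw [← neg_zero, ← integral_comp_neg_Ioi, ← lap_imag hY1 hY2 hu, ← integral_const_mul]
    refine setIntegral_congr_fun measurableSet_Ioi fun x hx => ?_
    have hx : 0 < x := hx
    have hx2 : ¬ (x < 0) := by linarith
    simp only [kern, lapI, levyDensity, Left.neg_neg_iff, Left.neg_pos_iff, hx, hx2, if_true, if_false, abs_neg, abs_of_pos hx]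
    push_cast
    ring_nf
  rw [h1, h2, I_mul_cpow hu, I_mul_cpow (neg_ne_zero.mpr hu), stablePart, varsigma_pow hY1 hY2 hCp hCm]
  rw [abs_neg, Real.sign_neg, Real.tan_eq_sin_div_cos]
  have h3 := (cos_neg_aux hY1 hY2).ne
  have h4 : (Cp + Cm : ℝ) ≠ 0 := by positivity
  have h3' : ((Real.cos (π * Y / 2) : ℝ) : ℂ) ≠ 0 := by exact_mod_cast h3
  have h4' : ((Cp : ℂ) + Cm) ≠ 0 := by exact_mod_cast h4
  simp only [Complex.ofReal_mul, Complex.ofReal_neg, Complex.ofReal_div, Complex.ofReal_add]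
  generalize ((Real.cos (π * Y / 2) : ℝ) : ℂ) = c at *
  generalize ((Real.sin (π * Y / 2) : ℝ) : ℂ) = s at *
  field_simp
  ring

/-- difference of the two Lévy densities -/
def kap (Y Cp Cm : ℝ) (q : ℝ → ℝ) (x : ℝ) : ℝ :=
  levyDensity Y Cp Cm q x - levyDensity Y Cp Cm (fun _ => 1) x

lemma kap_meas (Y Cp Cm : ℝ) {q : ℝ → ℝ} (hq : Measurable q) : Measurable (kap Y Cp Cm q) :=
  (levyDensity_meas Y Cp Cm hq).sub (levyDensity_meas Y Cp Cm measurable_const)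

lemma kap_dom {Y Cp Cm : ℝ} {q : ℝ → ℝ} (hY1 : 1 < Y) (hCp : 0 < Cp) (hCm : 0 < Cm)
    (hq : ∀ x, 0 ≤ q x) {M : ℝ} (hM : ∀ x, q x ≤ M) {αp αm : ℝ}
    (hp : IntegrableOn (fun x => |q x - 1 - αp * x| * x ^ (-Y - 1)) (Set.Ioc (0 : ℝ) 1))
    (hm : IntegrableOn (fun x => |q x - 1 - αm * x| * |x| ^ (-Y - 1)) (Set.Ico (-1 : ℝ) 0)) :
    ∃ (r : ℝ → ℝ) (C0 : ℝ), (∀ x, 0 ≤ r x) ∧ Integrable r ∧ 0 ≤ C0 ∧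
      (∀ x, |kap Y Cp Cm q x| ≤ r x + C0 * |x| ^ (-Y)) ∧
      (∀ x, |x| * |kap Y Cp Cm q x| ≤ r x + C0 * (min |x| 1 * |x| ^ (-Y))) := by
  have hM0 : 0 ≤ M := (hq 0).trans (hM 0)
  let C0 := Cp * |αp| + Cm * |αm| + (Cp + Cm) * (M + 1)
  let r1 := (Ioc (0:ℝ) 1).indicator (fun x => |q x - 1 - αp * x| * x ^ (-Y - 1))
  let r2 := (Ico (-1:ℝ) 0).indicator (fun x => |q x - 1 - αm * x| * |x| ^ (-Y - 1))
  have h1 : ∀ x, 0 ≤ r1 x := fun x => indicator_nonneg (fun y hy => by have := hy.1; positivity) x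
  have h2 : ∀ x, 0 ≤ r2 x := fun x => indicator_nonneg (fun y hy => by positivity) x
  have hC0 : 0 ≤ C0 := by positivity
  have key : ∀ x, (|x| ≤ 1 ∧ |kap Y Cp Cm q x| ≤ (Cp * r1 x + Cm * r2 x) + C0 * |x| ^ (-Y)) ∨
      (1 < |x| ∧ |kap Y Cp Cm q x| ≤ C0 * |x| ^ (-1-Y)) := by
    intro x
    rcases le_or_gt |x| 1 with hx | hx
    · left; refine ⟨hx, ?_⟩
      rcases lt_trichotomy x 0 with h | h | h
      · have e2 : r2 x = |q x - 1 - αm * x| * |x| ^ (-Y - 1) :=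
          indicator_of_mem (show x ∈ Ico (-1:ℝ) 0 from ⟨by linarith [neg_abs_le x], h⟩) _
        have e3 : kap Y Cp Cm q x = Cm * (q x - 1) * |x| ^ (-Y - 1) := by
          simp [kap, levyDensity, h, not_lt.mpr h.le]; ring_nf
        have e4 : |x| ^ (-Y) = |x| * |x| ^ (-Y - 1) := by
          have := abs_pos.mpr h.ne
          rw [show (-Y:ℝ) = 1 + (-Y-1) by ring, Real.rpow_add this, Real.rpow_one]; ring_nf
        have e5 : |q x - 1| ≤ |q x - 1 - αm * x| + |αm| * |x| := by
          rw [← abs_mul]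
          calc |q x - 1| = |(q x - 1 - αm * x) + αm * x| := by ring_nf
            _ ≤ _ := abs_add_le _ _
        rw [e3, e2, e4, abs_mul, abs_mul, abs_of_pos hCm, abs_of_nonneg (by positivity : 0 ≤ |x| ^ (-Y - 1))]
        calc Cm * |q x - 1| * |x| ^ (-Y - 1) ≤ Cm * (|q x - 1 - αm * x| + |αm| * |x|) * |x| ^ (-Y - 1) := by gcongr
          _ = Cm * (|q x - 1 - αm * x| * |x| ^ (-Y - 1)) + (Cm * |αm|) * (|x| * |x| ^ (-Y - 1)) := by ring
          _ ≤ _ := by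
            have := h1 x
            have e6 : Cm * |αm| ≤ C0 := by
              have : 0 ≤ Cp * |αp| := by positivity
              have : 0 ≤ (Cp + Cm) * (M + 1) := by positivity
              simp only [C0]; linarith
            have : 0 ≤ Cp * r1 x := by positivity
            have := mul_le_mul_of_nonneg_right e6 (show 0 ≤ |x| * |x| ^ (-Y - 1) by positivity)
            linarith
      · subst h
        simp only [kap, levyDensity, lt_self_iff_false, if_false, zero_mul, sub_self, abs_zero]
        have := h1 0; have := h2 0; positivity
      · have e2 : r1 x = |q x - 1 - αp * x| * x ^ (-Y - 1) :=
          indicator_of_mem (show x ∈ Ioc (0:ℝ) 1 from ⟨h, by linarith [le_abs_self x]⟩) _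
        have e3 : kap Y Cp Cm q x = Cp * (q x - 1) * x ^ (-Y - 1) := by
          simp [kap, levyDensity, h, abs_of_pos h]; ring_nf
        have e4 : |x| ^ (-Y) = |x| * x ^ (-Y - 1) := by
          rw [abs_of_pos h, show (-Y:ℝ) = 1 + (-Y-1) by ring, Real.rpow_add h, Real.rpow_one]; ring_nf
        have e5 : |q x - 1| ≤ |q x - 1 - αp * x| + |αp| * |x| := by
          rw [← abs_mul]
          calc |q x - 1| = |(q x - 1 - αp * x) + αp * x| := by ring_nf
            _ ≤ _ := abs_add_le _ _
        rw [e3, e2, e4, abs_mul, abs_mul, abs_of_pos hCp, abs_of_nonneg (by positivity : 0 ≤ x ^ (-Y - 1))]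
        calc Cp * |q x - 1| * x ^ (-Y - 1) ≤ Cp * (|q x - 1 - αp * x| + |αp| * |x|) * x ^ (-Y - 1) := by gcongr
          _ = Cp * (|q x - 1 - αp * x| * x ^ (-Y - 1)) + (Cp * |αp|) * (|x| * x ^ (-Y - 1)) := by ring
          _ ≤ _ := by
            have := h2 x
            have e6 : Cp * |αp| ≤ C0 := by
              have : 0 ≤ Cm * |αm| := by positivity
              have : 0 ≤ (Cp + Cm) * (M + 1) := by positivity
              simp only [C0]; linarith
            have : 0 ≤ Cm * r2 x := by positivity
            have := mul_le_mul_of_nonneg_right e6 (show 0 ≤ |x| * x ^ (-Y - 1) by positivity)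
            linarith
    · right; refine ⟨hx, ?_⟩
      have b1 := levyDensity_bound (Y := Y) hCp hCm hq hM x
      have b2 := levyDensity_bound (Y := Y) (q := fun _ => 1) hCp hCm (by simp) (M := 1) (by simp) x
      have b3 : |kap Y Cp Cm q x| ≤ _ := abs_sub _ _
      refine b3.trans ((add_le_add b1 b2).trans ?_)
      rw [← add_mul]
      gcongr
      have : 0 ≤ Cm * |αm| := by positivity
      have : 0 ≤ Cp * |αp| := by positivity
      simp only [C0]; nlinarith
  refine ⟨fun x => Cp * r1 x + Cm * r2 x, C0, fun x => ?_, ?_, hC0, fun x => ?_, fun x => ?_⟩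
  · have := h1 x; have := h2 x; positivity
  · exact ((integrable_indicator_iff measurableSet_Ioc).mpr hp).const_mul Cp |>.add
      (((integrable_indicator_iff measurableSet_Ico).mpr hm).const_mul Cm)
  · have := h1 x; have := h2 x
    have hr : 0 ≤ Cp * r1 x + Cm * r2 x := by positivity
    rcases key x with ⟨_, h⟩ | ⟨hx, h⟩
    · exact h
    · have : |x| ^ (-1 - Y) ≤ |x| ^ (-Y) := Real.rpow_le_rpow_of_exponent_le hx.le (by linarith)
      have := mul_le_mul_of_nonneg_left this hC0
      linarith
  · have := h1 x; have := h2 x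
    have hr : 0 ≤ Cp * r1 x + Cm * r2 x := by positivity
    rcases key x with ⟨hx, h⟩ | ⟨hx, h⟩
    · rw [min_eq_left hx]
      have h5 := mul_le_mul_of_nonneg_left h (abs_nonneg x)
      have := mul_le_mul_of_nonneg_right hx hr
      simp only at *
      linarith
    · rw [min_eq_right hx.le]
      have e4 : |x| * |x| ^ (-1 - Y) = |x| ^ (-Y) := by
        have : 0 < |x| := by linarith
        rw [show (-Y:ℝ) = 1 + (-1-Y) by ring, Real.rpow_add this, Real.rpow_one]
      have := mul_le_mul_of_nonneg_left h (abs_nonneg x)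
      have e5 : |x| * (C0 * |x| ^ (-1 - Y)) = C0 * |x| ^ (-Y) := by rw [← e4]; ring
      linarith

lemma min_scale_int {Y e : ℝ} (hY1 : 1 < Y) (hY2 : Y < 2) (he : 0 < e) :
    Integrable (fun x : ℝ => min |x| e * |x| ^ (-Y)) ∧
    ∫ x : ℝ, min |x| e * |x| ^ (-Y) = e ^ (2 - Y) * ∫ x : ℝ, min |x| 1 * |x| ^ (-Y) := by
  have hw : Integrable (fun x : ℝ => min |x| 1 * |x| ^ (-Y)) :=
    integrable_of_abs (f := fun x => min x 1 * x ^ (-Y)) (aux_w_int hY1 hY2)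
  have heq : ∀ x : ℝ, min |x| e * |x| ^ (-Y) = e ^ (1 - Y) * (min |e⁻¹ * x| 1 * |e⁻¹ * x| ^ (-Y)) := by
    intro x
    rw [abs_mul, abs_of_pos (inv_pos.mpr he), Real.mul_rpow (by positivity) (abs_nonneg _),
      Real.inv_rpow he.le, ← Real.rpow_neg he.le, neg_neg,
      show (1 - Y : ℝ) = 1 + -Y by ring, Real.rpow_add he, Real.rpow_one]
    have h1 : e * min (e⁻¹ * |x|) 1 = min |x| e := by
      rw [mul_min_of_nonneg _ _ he.le]; congr 1 <;> field_simp
    have h2 : e ^ (-Y) * e ^ Y = 1 := by rw [← Real.rpow_add he]; simp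
    rw [← h1]
    linear_combination (-(e * min (e⁻¹ * |x|) 1 * |x| ^ (-Y))) * h2
  constructor
  · refine Integrable.congr ((hw.comp_mul_left' (inv_ne_zero he.ne')).const_mul (e ^ (1 - Y))) (ae_of_all _ fun x => (heq x).symm)
  · simp_rw [heq]
    rw [integral_const_mul, Measure.integral_comp_mul_left (fun x => min |x| 1 * |x| ^ (-Y)), inv_inv,
      abs_of_pos he, smul_eq_mul, ← mul_assoc, show (2 - Y : ℝ) = (1 - Y) + 1 by ring, Real.rpow_add he, Real.rpow_one]

lemma kap_min {Y : ℝ} (hY1 : 1 < Y) (hY2 : Y < 2) {κ r : ℝ → ℝ} {C0 : ℝ} (hκ : Measurable κ)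
    (hr : ∀ x, 0 ≤ r x) (hri : Integrable r) (hC0 : 0 ≤ C0)
    (hb : ∀ x, |κ x| ≤ r x + C0 * |x| ^ (-Y)) :
    ∃ C, 0 ≤ C ∧ ∀ e, 0 < e → e ≤ 1 → Integrable (fun x => |κ x| * min |x| e) ∧
      ∫ x, |κ x| * min |x| e ≤ C * e ^ (2 - Y) := by
  have hI0 : 0 ≤ ∫ x : ℝ, min |x| 1 * |x| ^ (-Y) := integral_nonneg fun x => by positivity
  have hr0 : 0 ≤ ∫ x, r x := integral_nonneg hr
  refine ⟨(∫ x, r x) + C0 * ∫ x : ℝ, min |x| 1 * |x| ^ (-Y), by positivity, fun e he he1 => ?_⟩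
  obtain ⟨i1, i2⟩ := min_scale_int hY1 hY2 he
  have hd : Integrable (fun x => e * r x + C0 * (min |x| e * |x| ^ (-Y))) :=
    (hri.const_mul e).add (i1.const_mul C0)
  have hle : ∀ x, |κ x| * min |x| e ≤ e * r x + C0 * (min |x| e * |x| ^ (-Y)) := by
    intro x
    have h1 : 0 ≤ min |x| e := by positivity
    have h2 := mul_le_mul_of_nonneg_right (hb x) h1
    have h3 := mul_le_mul_of_nonneg_right (min_le_right |x| e) (hr x)
    nlinarith
  have hIntg : Integrable (fun x => |κ x| * min |x| e) := by
    refine hd.mono' (by apply Measurable.aestronglyMeasurable; fun_prop) (ae_of_all _ fun x => ?_)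
    rw [Real.norm_of_nonneg (by positivity)]; exact hle x
  refine ⟨hIntg, (integral_mono hIntg hd hle).trans ?_⟩
  rw [integral_add (hri.const_mul e) (i1.const_mul C0), integral_const_mul, integral_const_mul, i2]
  have : e ≤ e ^ (2 - Y) := by
    calc e = e ^ (1:ℝ) := (Real.rpow_one e).symm
      _ ≤ _ := Real.rpow_le_rpow_of_exponent_ge he he1 (by linarith)
  nlinarith

/-- `χ(u) = ∫ (e^{iux} - 1) κ(x) dx` -/
def chi (κ : ℝ → ℝ) (u : ℝ) : ℂ := ∫ x : ℝ, (Complex.exp (Complex.I * u * x) - 1) * (κ x : ℂ)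

lemma expm1_bound (u x : ℝ) : ‖Complex.exp (Complex.I * u * x) - 1‖ ≤ |u| * |x| := by
  have := Real.norm_exp_I_mul_ofReal_sub_one_le (x := u * x)
  rw [Real.norm_eq_abs, abs_mul] at this
  convert this using 4; push_cast; ring

lemma chi_int {κ : ℝ → ℝ} (hκ : Measurable κ) (hi : Integrable (fun x => |x| * |κ x|)) (u : ℝ) :
    Integrable (fun x : ℝ => (Complex.exp (Complex.I * u * x) - 1) * (κ x : ℂ)) := by
  refine (hi.const_mul |u|).mono' (by apply Measurable.aestronglyMeasurable; fun_prop) (ae_of_all _ fun x => ?_)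
  rw [norm_mul, Complex.norm_real, Real.norm_eq_abs, ← mul_assoc]
  gcongr; exact expm1_bound u x

lemma chi_bound {κ : ℝ → ℝ} (hi : Integrable (fun x => |x| * |κ x|)) (u : ℝ) :
    ‖chi κ u‖ ≤ |u| * ∫ x, |x| * |κ x| := by
  rw [chi, ← integral_const_mul]
  refine norm_integral_le_of_norm_le (hi.const_mul |u|) (ae_of_all _ fun x => ?_)
  rw [norm_mul, Complex.norm_real, Real.norm_eq_abs, ← mul_assoc]
  gcongr; exact expm1_bound u x

lemma chi_meas {κ : ℝ → ℝ} (hκ : Measurable κ) : Measurable (chi κ) := by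
  unfold chi
  apply StronglyMeasurable.measurable
  apply StronglyMeasurable.integral_prod_right (f := fun u x : ℝ => (Complex.exp (Complex.I * u * x) - 1) * (κ x : ℂ))
  apply Measurable.stronglyMeasurable
  simp only [Function.uncurry_def]
  fun_prop

/-- total drift -/
def mdrift (b Y Cp Cm : ℝ) (q : ℝ → ℝ) : ℝ :=
  b + ∫ x, (if |x| ≤ 1 then 0 else x * levyDensity Y Cp Cm q x)

lemma psiJ_kern {b Y Cp Cm : ℝ} {q : ℝ → ℝ} (hY1 : 1 < Y) (hY2 : Y < 2) (hCp : 0 < Cp) (hCm : 0 < Cm)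
    (hqm : Measurable q) (hq : ∀ x, 0 ≤ q x) {M : ℝ} (hM : ∀ x, q x ≤ M) (u : ℝ) :
    psiJ b Y Cp Cm q u = Complex.I * (mdrift b Y Cp Cm q) * u
      + ∫ x, kern u x * (levyDensity Y Cp Cm q x : ℂ) := by
  have hM0 : 0 ≤ M := (hq 0).trans (hM 0)
  have hsm := levyDensity_meas Y Cp Cm hqm
  have hsb := levyDensity_bound (Y := Y) hCp hCm hq hM
  have hsn := levyDensity_nonneg (Y := Y) hCp hCm hq
  have hw : Integrable (fun x : ℝ => min |x| 1 * |x| ^ (-Y)) :=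
    integrable_of_abs (f := fun x => min x 1 * x ^ (-Y)) (aux_w_int hY1 hY2)
  have hmeas : Measurable (fun x : ℝ => if |x| ≤ 1 then 0 else x * levyDensity Y Cp Cm q x) :=
    Measurable.ite (measurableSet_le (by fun_prop) measurable_const) measurable_const (by fun_prop)
  have i1 : Integrable (fun x : ℝ => if |x| ≤ 1 then 0 else x * levyDensity Y Cp Cm q x) := by
    refine (hw.const_mul ((Cp + Cm) * M)).mono' hmeas.aestronglyMeasurable (ae_of_all _ fun x => ?_)
    split_ifs with hx
    · rw [norm_zero]; positivity
    · push Not at hx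
      rw [min_eq_right hx.le, one_mul, norm_mul, Real.norm_eq_abs, Real.norm_eq_abs]
      have e4 : |x| * |x| ^ (-1 - Y) = |x| ^ (-Y) := by
        have : 0 < |x| := by linarith
        rw [show (-Y:ℝ) = 1 + (-1-Y) by ring, Real.rpow_add this, Real.rpow_one]
      calc _ ≤ |x| * ((Cp + Cm) * M * |x| ^ (-1 - Y)) := by gcongr; exact hsb x
        _ = _ := by rw [← e4]; ring
  have i2 := kern_dens_int hY1 hY2 hsm hsb u
  rw [psiJ, mdrift, levyMeasure, integral_withDensity_eq_integral_toReal_smul (by fun_prop)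
    (ae_of_all _ fun x => ENNReal.ofReal_lt_top)]
  have heq : ∀ x : ℝ, (ENNReal.ofReal (levyDensity Y Cp Cm q x)).toReal •
      (Complex.exp (Complex.I * u * x) - 1 - (if |x| ≤ 1 then Complex.I * u * x else 0)) =
      kern u x * (levyDensity Y Cp Cm q x : ℂ) + (Complex.I * u) * ((if |x| ≤ 1 then 0 else x * levyDensity Y Cp Cm q x : ℝ) : ℂ) := by
    intro x
    rw [ENNReal.toReal_ofReal (hsn x), kern, Complex.real_smul]
    split_ifs <;> push_cast <;> ring
  simp_rw [heq]
  have j2 : Integrable (fun x => (Complex.I * u) * ((if |x| ≤ 1 then 0 else x * levyDensity Y Cp Cm q x : ℝ) : ℂ)) :=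
    (i1.ofReal (𝕜 := ℂ)).const_mul (Complex.I * u)
  rw [integral_add i2 j2, integral_const_mul, integral_complex_ofReal]
  push_cast; ring

lemma kern_kap {κ : ℝ → ℝ} (hκ : Measurable κ) (hi : Integrable (fun x => |x| * |κ x|)) (u : ℝ) :
    Integrable (fun x => kern u x * (κ x : ℂ)) ∧
    ∫ x, kern u x * (κ x : ℂ) = chi κ u - Complex.I * u * (∫ x, x * κ x : ℝ) := by
  have i1 : Integrable (fun x => x * κ x) := by
    refine hi.mono' (by apply Measurable.aestronglyMeasurable; fun_prop) (ae_of_all _ fun x => ?_)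
    rw [norm_mul]; simp
  have heq : ∀ x, kern u x * (κ x : ℂ) = (Complex.exp (Complex.I * u * x) - 1) * (κ x : ℂ) - (Complex.I * u) * ((x * κ x : ℝ) : ℂ) := by
    intro x; unfold kern; push_cast; ring
  simp_rw [heq]
  have j1 := chi_int hκ hi u
  have j2 : Integrable (fun x => (Complex.I * u) * ((x * κ x : ℝ) : ℂ)) := (i1.ofReal (𝕜 := ℂ)).const_mul (Complex.I * u)
  refine ⟨j1.sub j2, ?_⟩
  rw [integral_sub j1 j2, integral_const_mul, integral_complex_ofReal, chi]

lemma kern_s {Y Cp Cm : ℝ} {q : ℝ → ℝ} (hY1 : 1 < Y) (hY2 : Y < 2) (hCp : 0 < Cp) (hCm : 0 < Cm)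
    (hqm : Measurable q)
    (hi : Integrable (fun x => |x| * |kap Y Cp Cm q x|)) (u : ℝ) :
    ∫ x, kern u x * (levyDensity Y Cp Cm q x : ℂ) =
      - stablePart Y Cp Cm u + chi (kap Y Cp Cm q) u - Complex.I * u * (∫ x, x * kap Y Cp Cm q x : ℝ) := by
  have i1 := kern_dens_int hY1 hY2 (levyDensity_meas Y Cp Cm (q := fun _ => 1) measurable_const)
    (levyDensity_bound hCp hCm (by simp) (M := 1) (by simp)) u
  obtain ⟨i2, e2⟩ := kern_kap (kap_meas Y Cp Cm hqm) hi u
  have heq : ∀ x, kern u x * (levyDensity Y Cp Cm q x : ℂ) =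
      kern u x * (levyDensity Y Cp Cm (fun _ => 1) x : ℂ) + kern u x * (kap Y Cp Cm q x : ℂ) := by
    intro x; unfold kap; push_cast; ring
  simp_rw [heq]
  rw [integral_add i1 i2, stable_kern hY1 hY2 hCp hCm, e2]
  ring

lemma tail_cf {μ : Measure ℝ} [IsProbabilityMeasure μ] {ρ : ℝ → ℂ} {Y K B : ℝ} (hY1 : 1 < Y) (hY2 : Y < 2)
    (hK : 0 ≤ K) (hB : 0 ≤ B)
    (hcf : ∀ u, charFun μ u = Complex.exp (ρ u)) (hρ : ∀ u, ‖ρ u‖ ≤ K * |u| ^ Y + B * u ^ 2)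
    {r : ℝ} (hr : 0 < r) : μ.real {x | r < |x|} ≤ 16 * (K * r ^ (-Y) + B * r⁻¹ ^ 2) := by
  refine (measureReal_abs_gt_le_integral_charFun hr).trans ?_
  have hre : ∀ u, (ρ u).re ≤ 0 := by
    intro u
    have := norm_charFun_le_one (μ := μ) u
    rwa [hcf, Complex.norm_exp, Real.exp_le_one_iff] at this
  have hb : ∀ u ∈ Set.uIoc (-2 * r⁻¹) (2 * r⁻¹), ‖1 - charFun μ u‖ ≤ 8 * (K * r ^ (-Y) + B * r⁻¹ ^ 2) := by
    intro u hu
    have hr' : 0 < r⁻¹ := inv_pos.mpr hr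
    rw [Set.uIoc_of_le (by linarith)] at hu
    have hu2 : |u| ≤ 2 * r⁻¹ := abs_le.mpr ⟨by linarith [hu.1], hu.2⟩
    have h1 := aux_exp1 (ρ u) (hre u)
    have h2 : |u| ^ Y ≤ 4 * r ^ (-Y) := by
      calc |u| ^ Y ≤ (2 * r⁻¹) ^ Y := Real.rpow_le_rpow (abs_nonneg _) hu2 (by linarith)
        _ = 2 ^ Y * r ^ (-Y) := by
          rw [Real.mul_rpow (by norm_num) hr'.le, Real.inv_rpow hr.le, Real.rpow_neg hr.le]
        _ ≤ 2 ^ (2:ℝ) * r ^ (-Y) := by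
          gcongr
          · norm_num
        _ = _ := by norm_num
    have h3 : u ^ 2 ≤ 4 * r⁻¹ ^ 2 := by
      rw [← sq_abs u]
      calc |u| ^ 2 ≤ (2 * r⁻¹) ^ 2 := by gcongr
        _ = _ := by ring
    rw [hcf, ← norm_neg, neg_sub]
    have h4 : min ‖ρ u‖ 1 ≤ ‖ρ u‖ := min_le_left _ _
    have := hρ u
    have := mul_le_mul_of_nonneg_left h2 hK
    have := mul_le_mul_of_nonneg_left h3 hB
    linarith
  have h5 := intervalIntegral.norm_integral_le_of_norm_le_const hb
  rw [show (2 * r⁻¹ - -2 * r⁻¹) = 4 * r⁻¹ by ring, abs_of_pos (by positivity)] at h5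
  calc _ ≤ 2⁻¹ * r * (8 * (K * r ^ (-Y) + B * r⁻¹ ^ 2) * (4 * r⁻¹)) := by gcongr
    _ = _ := by field_simp; ring

lemma tail_cf_shift {μ : Measure ℝ} [IsProbabilityMeasure μ] {ρ : ℝ → ℂ} {Y K B a : ℝ} (hY1 : 1 < Y) (hY2 : Y < 2)
    (hK : 0 ≤ K) (hB : 0 ≤ B)
    (hcf : ∀ u, charFun μ u = Complex.exp (Complex.I * a * u + ρ u)) (hρ : ∀ u, ‖ρ u‖ ≤ K * |u| ^ Y + B * u ^ 2)
    {r : ℝ} (hr : 0 < r) : μ.real {x | r < |x - a|} ≤ 16 * (K * r ^ (-Y) + B * r⁻¹ ^ 2) := by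
  have hp : IsProbabilityMeasure (μ.map (fun x => x + (-a))) := Measure.isProbabilityMeasure_map (by fun_prop)
  have := tail_cf (μ := μ.map (fun x => x + (-a))) hY1 hY2 hK hB (ρ := ρ) (fun u => ?_) hρ hr
  · rw [map_measureReal_apply (by fun_prop) (measurableSet_lt measurable_const (by fun_prop))] at this
    simpa only [preimage_setOf_eq, ← sub_eq_add_neg] using this
  · rw [charFun_map_add_const, hcf, ← Complex.exp_add]
    congr 1
    simp
    ring

lemma first_moment_tail {μ : Measure ℝ} [IsProbabilityMeasure μ] {Y T R : ℝ} (hY1 : 1 < Y) (hT : 0 ≤ T) (hR : 0 < R)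
    (ht : ∀ r, R ≤ r → μ.real {x | r < |x|} ≤ T * r ^ (-Y)) :
    Integrable (fun x => {x : ℝ | R < |x|}.indicator (fun x => |x|) x) μ ∧
    ∫ x, {x : ℝ | R < |x|}.indicator (fun x => |x|) x ∂μ ≤ Y / (Y - 1) * T * R ^ (1 - Y) := by
  set g : ℝ → ℝ := fun x => {x : ℝ | R < |x|}.indicator (fun x => |x|) x with hg
  have hSm : MeasurableSet {x : ℝ | R < |x|} := measurableSet_lt measurable_const (by fun_prop)
  have hgm : Measurable g := Measurable.indicator (by fun_prop) hSm
  have hg0 : ∀ x, 0 ≤ g x := fun x => indicator_nonneg (fun y _ => abs_nonneg y) x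
  let φ : ℝ → ℝ := fun t => T * (max t R) ^ (-Y)
  have hφ0 : ∀ t, 0 ≤ φ t := fun t => by
    have : 0 < max t R := lt_max_of_lt_right hR
    positivity
  have e1 : EqOn (fun _ => T * R ^ (-Y)) φ (Ioc 0 R) := by
    intro t ht; simp only [φ]; rw [max_eq_right ht.2]
  have e2 : EqOn (fun t => T * t ^ (-Y)) φ (Ioi R) := by
    intro t ht; simp only [φ]; rw [max_eq_left (le_of_lt ht)]
  have i1 : IntegrableOn φ (Ioc 0 R) := by
    exact IntegrableOn.congr_fun (integrableOn_const (by simp)) e1 measurableSet_Ioc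
  have i2 : IntegrableOn φ (Ioi R) := by
    refine IntegrableOn.congr_fun ?_ e2 measurableSet_Ioi
    exact (integrableOn_Ioi_rpow_of_lt (by linarith) hR).const_mul T
  have iφ : IntegrableOn φ (Ioi 0) := by
    rw [← Ioc_union_Ioi_eq_Ioi hR.le]; exact i1.union i2
  have hval : ∫ t in Ioi 0, φ t = Y / (Y - 1) * T * R ^ (1 - Y) := by
    rw [← Ioc_union_Ioi_eq_Ioi hR.le, setIntegral_union (Ioc_disjoint_Ioi le_rfl) measurableSet_Ioi i1 i2,
      ← setIntegral_congr_fun measurableSet_Ioc e1, ← setIntegral_congr_fun measurableSet_Ioi e2,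
      setIntegral_const, integral_const_mul, integral_Ioi_rpow_of_lt (by linarith) hR]
    simp only [setIntegral_const, smul_eq_mul, Real.volume_real_Ioc, sub_zero, max_eq_left hR.le]
    rw [show (1 - Y : ℝ) = 1 + -Y by ring, Real.rpow_add hR, Real.rpow_one, show -Y + 1 = -(Y - 1) by ring,
      show -(Y-1) = 1 + -Y by ring, Real.rpow_add hR, Real.rpow_one]
    have : Y - 1 ≠ 0 := by linarith
    have : 1 + -Y ≠ 0 := by intro h; apply this; linarith
    field_simp
    ring
  have hl : ∫⁻ x, ENNReal.ofReal (g x) ∂μ ≤ ENNReal.ofReal (Y / (Y - 1) * T * R ^ (1 - Y)) := by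
    rw [lintegral_eq_lintegral_meas_lt μ (ae_of_all _ hg0) hgm.aemeasurable, ← hval,
      ofReal_integral_eq_lintegral_ofReal iφ (ae_of_all _ hφ0)]
    refine setLIntegral_mono (by fun_prop) fun t ht0 => ?_
    have ht0 : 0 < t := ht0
    have hsub : {a | t < g a} ⊆ {x | max t R < |x|} := by
      intro x hx
      simp only [mem_setOf_eq, hg, indicator_apply] at hx ⊢
      split_ifs at hx with h
      · exact max_lt hx h
      · linarith
    refine (measure_mono hsub).trans ?_
    rw [← ofReal_measureReal]
    exact ENNReal.ofReal_le_ofReal (ht _ (le_max_right _ _))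
  have hIntg : Integrable g μ := by
    refine ⟨hgm.aestronglyMeasurable, ?_⟩
    rw [hasFiniteIntegral_iff_ofReal (ae_of_all _ hg0)]
    exact hl.trans_lt ENNReal.ofReal_lt_top
  refine ⟨hIntg, ?_⟩
  rw [integral_eq_lintegral_of_nonneg_ae (ae_of_all _ hg0) hgm.aestronglyMeasurable]
  refine ENNReal.toReal_le_of_le_ofReal ?_ hl
  have : 0 < Y - 1 := by linarith
  positivity

lemma mean_cf {μ : Measure ℝ} [IsProbabilityMeasure μ] {ρ : ℝ → ℂ} {Y K B a : ℝ} (hY1 : 1 < Y) (hY2 : Y < 2)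
    (hK : 0 ≤ K) (hB : 0 ≤ B)
    (hcf : ∀ u, charFun μ u = Complex.exp (Complex.I * a * u + ρ u)) (hρ : ∀ u, ‖ρ u‖ ≤ K * |u| ^ Y + B * u ^ 2)
    (hi : Integrable (fun x => x) μ) : ∫ x, x ∂μ = a := by
  have h1 := iteratedDeriv_charFun_zero (μ := μ) (n := 1) (by
    rw [Nat.cast_one, memLp_one_iff_integrable]; exact hi)
  have hρ0 : ρ 0 = 0 := by
    have := hρ 0
    rw [abs_zero, Real.zero_rpow (by linarith)] at this
    simpa using this
  have hd : HasDerivAt ρ 0 0 := by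
    rw [hasDerivAt_iff_isLittleO]
    simp only [hρ0, sub_zero, smul_zero]
    have h2 : ρ =O[𝓝 0] (fun u : ℝ => |u| ^ Y) := by
      refine IsBigO.of_bound (K + B) ?_
      have : ∀ᶠ u : ℝ in 𝓝 0, |u| < 1 := by
        have := (continuous_abs (G := ℝ)).tendsto 0
        rw [abs_zero] at this
        exact this.eventually (gt_mem_nhds one_pos)
      filter_upwards [this] with u hu
      rw [Real.norm_of_nonneg (by positivity)]
      have h3 : u ^ 2 ≤ |u| ^ Y := by
        rcases eq_or_ne u 0 with rfl | h
        · simp; positivity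
        rw [← sq_abs, ← Real.rpow_natCast]
        exact Real.rpow_le_rpow_of_exponent_ge (abs_pos.mpr h) hu.le (by push_cast; linarith)
      nlinarith [hρ u, mul_le_mul_of_nonneg_left h3 hB]
    refine h2.trans_isLittleO ?_
    have h4 : (fun u : ℝ => |u| ^ Y) = fun u => |u| ^ (Y - 1) * |u| := by
      ext u
      rcases eq_or_ne u 0 with rfl | h
      · simp [Real.zero_rpow (show Y ≠ 0 by linarith)]
      · have := abs_pos.mpr h
        rw [Real.rpow_sub_one this.ne']; field_simp
    rw [h4]
    have h5 : Tendsto (fun u : ℝ => |u| ^ (Y - 1)) (𝓝 0) (𝓝 0) := by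
      have : ContinuousAt (fun u : ℝ => |u| ^ (Y - 1)) 0 :=
        ContinuousAt.rpow_const (continuous_abs.continuousAt) (Or.inr (by linarith))
      have h6 := this.tendsto
      simpa [Real.zero_rpow (show Y - 1 ≠ 0 by linarith)] using h6
    have h7 : (fun u : ℝ => |u| ^ (Y - 1) * |u|) =o[𝓝 0] (fun u : ℝ => (1:ℝ) * |u|) :=
      ((isLittleO_one_iff ℝ).mpr h5).mul_isBigO (isBigO_refl _ _)
    simp only [one_mul] at h7
    exact h7.trans_isBigO (isBigO_abs_left.mpr (isBigO_refl _ _))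
  have hd2 : HasDerivAt (charFun μ) (Complex.I * a) 0 := by
    have e : charFun μ = fun u : ℝ => Complex.exp (Complex.I * a * u + ρ u) := funext hcf
    rw [e]
    have h8 : HasDerivAt (fun u : ℝ => Complex.I * a * (u:ℂ) + ρ u) (Complex.I * a * 1 + 0) 0 :=
      ((Complex.ofRealCLM.hasDerivAt (x := 0)).const_mul (Complex.I * a)).add hd
    have := h8.cexp
    simpa [hρ0] using this
  rw [iteratedDeriv_one, hd2.deriv] at h1
  simp only [pow_one] at h1
  have := mul_left_cancel₀ Complex.I_ne_zero h1
  exact_mod_cast this.symm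

lemma gauss_mom (n : ℕ) : ∃ M, 0 ≤ M ∧ ∀ v : ℝ≥0, Integrable (fun w => |w| ^ n) (gaussianReal 0 v) ∧
    ∫ w, |w| ^ n ∂(gaussianReal 0 v) = M * Real.sqrt v ^ n := by
  have hi : ∀ v : ℝ≥0, Integrable (fun w => |w| ^ n) (gaussianReal 0 v) := fun v =>
    (memLp_id_gaussianReal (μ := 0) (v := v) n).integrable_norm_pow'
  refine ⟨∫ w, |w| ^ n ∂(gaussianReal 0 1), integral_nonneg fun w => by positivity, fun v => ⟨hi v, ?_⟩⟩
  have h : gaussianReal 0 v = (gaussianReal 0 1).map (fun x => Real.sqrt v * x) := by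
    rw [gaussianReal_map_const_mul]
    congr 1
    · simp
    · ext; simp
  rw [h, integral_map (by fun_prop) (by fun_prop)]
  simp_rw [abs_mul, mul_pow]
  rw [integral_const_mul, abs_of_nonneg (Real.sqrt_nonneg _)]
  ring

lemma exp_poly {y : ℝ} (hy : 0 < y) : Real.exp (-y) ≤ 6 / y ^ 3 := by
  rw [Real.exp_neg, inv_eq_one_div, div_le_div_iff₀ (Real.exp_pos _) (by positivity)]
  have := Real.pow_div_factorial_le_exp y hy.le 3
  rw [div_le_iff₀ (by positivity)] at this
  norm_num [Nat.factorial] at this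
  linarith

/-- gaussian measure of a set away from the origin -/
lemma gauss_set {v : ℝ≥0} (hv : v ≠ 0) {A : Set ℝ} (hA : MeasurableSet A) {ℓ m : ℝ} (hm : 0 ≤ m) (hℓ : 0 ≤ ℓ)
    (hvol : volume A ≤ ENNReal.ofReal ℓ) (hAm : ∀ w ∈ A, m ≤ |w|) :
    gaussianReal 0 v A ≤ ENNReal.ofReal ((Real.sqrt v)⁻¹ * Real.exp (-(m ^ 2 / (2 * v))) * ℓ) := by
  have hv' : (0:ℝ) < v := by positivity
  rw [gaussianReal_apply 0 hv]
  have hb : ∀ w ∈ A, gaussianPDF 0 v w ≤ ENNReal.ofReal ((Real.sqrt v)⁻¹ * Real.exp (-(m ^ 2 / (2 * v)))) := by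
    intro w hw
    rw [gaussianPDF]
    apply ENNReal.ofReal_le_ofReal
    rw [gaussianPDFReal]
    have h1 : Real.sqrt v ≤ Real.sqrt (2 * π * v) := by
      apply Real.sqrt_le_sqrt
      nlinarith [Real.pi_gt_three]
    have h2 : 0 < Real.sqrt v := Real.sqrt_pos.mpr hv'
    have h3 : m ^ 2 ≤ (w - 0) ^ 2 := by
      rw [sub_zero, ← sq_abs w]; have := hAm w hw; gcongr
    rw [neg_div]
    gcongr
  calc ∫⁻ x in A, gaussianPDF 0 v x ≤ ∫⁻ x in A, ENNReal.ofReal ((Real.sqrt v)⁻¹ * Real.exp (-(m ^ 2 / (2 * v)))) :=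
        setLIntegral_mono (by fun_prop) hb
    _ = ENNReal.ofReal ((Real.sqrt v)⁻¹ * Real.exp (-(m ^ 2 / (2 * v)))) * volume A := by simp
    _ ≤ ENNReal.ofReal ((Real.sqrt v)⁻¹ * Real.exp (-(m ^ 2 / (2 * v)))) * ENNReal.ofReal ℓ := by gcongr
    _ = _ := by rw [← ENNReal.ofReal_mul (by positivity)]

lemma boundary_conv {v : ℝ≥0} (hv : v ≠ 0) (lam : Measure ℝ) [IsProbabilityMeasure lam] {e d : ℝ} (he : 0 < e)
    (hd : 0 ≤ d) (hde : d ≤ e / 4) :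
    (gaussianReal 0 v ∗ lam).real {y | |(|y| - e)| ≤ d} ≤
      4 * d * ((Real.sqrt v)⁻¹ * (Real.exp (-(e ^ 2 / (8 * v))) + lam.real {z | e / 4 < |z|})) := by
  set S : Set ℝ := {y | |(|y| - e)| ≤ d} with hS
  have hSm : MeasurableSet S := measurableSet_le (by fun_prop) measurable_const
  have hTm : MeasurableSet {z : ℝ | e / 4 < |z|} := measurableSet_lt measurable_const (by fun_prop)
  have hvolS : volume S ≤ ENNReal.ofReal (4 * d) := by
    have hsub : S ⊆ Icc (e - d) (e + d) ∪ Icc (-e - d) (-e + d) := by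
      intro y hy
      simp only [hS, mem_setOf_eq, abs_le] at hy
      rcases le_total 0 y with h | h
      · rw [abs_of_nonneg h] at hy; left; constructor <;> linarith [hy.1, hy.2]
      · rw [abs_of_nonpos h] at hy; right; constructor <;> linarith [hy.1, hy.2]
    refine (measure_mono hsub).trans ((measure_union_le _ _).trans ?_)
    rw [Real.volume_Icc, Real.volume_Icc, ← ENNReal.ofReal_add (by linarith) (by linarith)]
    apply ENNReal.ofReal_le_ofReal; linarith
  have hvol : ∀ z : ℝ, volume {w | w + z ∈ S} ≤ ENNReal.ofReal (4 * d) := by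
    intro z
    have : {w | w + z ∈ S} = (fun w => w + z) ⁻¹' S := rfl
    rw [this, measure_preimage_add_right]; exact hvolS
  have hm : ∀ z : ℝ, MeasurableSet {w | w + z ∈ S} := fun z => (measurable_id.add_const z) hSm
  set a1 := (Real.sqrt v)⁻¹ * Real.exp (-(e ^ 2 / (8 * v))) * (4 * d)
  set a2 := (Real.sqrt v)⁻¹ * (4 * d)
  have ha1 : 0 ≤ a1 := by positivity
  have ha2 : 0 ≤ a2 := by positivity
  have hb : ∀ z, gaussianReal 0 v {w | w + z ∈ S} ≤
      ENNReal.ofReal a1 + {z : ℝ | e / 4 < |z|}.indicator (fun _ => ENNReal.ofReal a2) z := by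
    intro z
    by_cases hz : e / 4 < |z|
    · rw [indicator_of_mem (by exact hz)]
      have := gauss_set hv (hm z) le_rfl (by linarith) (hvol z) (fun w _ => abs_nonneg w)
      refine this.trans (le_add_left ?_)
      apply ENNReal.ofReal_le_ofReal; simp [a2]
    · rw [indicator_of_notMem (by exact hz), add_zero]
      have := gauss_set hv (hm z) (m := e / 2) (by linarith) (by linarith) (hvol z) (fun w hw => ?_)
      · refine this.trans (ENNReal.ofReal_le_ofReal (le_of_eq ?_))
        simp only [a1]; ring_nf
      · push Not at hz
        have h1 : |(|w + z| - e)| ≤ d := hw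
        have h2 := (abs_le.mp h1).1
        have := abs_add_le w z
        linarith
  have hle : (gaussianReal 0 v ∗ lam) S ≤ ENNReal.ofReal (a1 + a2 * lam.real {z | e / 4 < |z|}) := by
    have hPm : MeasurableSet ((fun x : ℝ × ℝ => x.1 + x.2) ⁻¹' S) :=
      (by fun_prop : Measurable (fun x : ℝ × ℝ => x.1 + x.2)) hSm
    rw [Measure.conv, Measure.map_apply (by fun_prop) hSm, Measure.prod_apply_symm hPm]
    calc _ ≤ ∫⁻ z, (ENNReal.ofReal a1 + {z : ℝ | e / 4 < |z|}.indicator (fun _ => ENNReal.ofReal a2) z) ∂lam :=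
          lintegral_mono fun z => hb z
      _ = ENNReal.ofReal a1 + ENNReal.ofReal a2 * lam {z | e / 4 < |z|} := by
        rw [lintegral_add_left measurable_const, lintegral_indicator_const hTm]; simp
      _ = _ := by
        rw [ENNReal.ofReal_add ha1 (by positivity), ENNReal.ofReal_mul ha2, ofReal_measureReal]
  refine (ENNReal.toReal_le_of_le_ofReal (by positivity) hle).trans (le_of_eq ?_)
  simp only [a1, a2]; ring

lemma rpow_half_neg {r p : ℝ} (hr : 0 < r) (hp : -2 ≤ p) (c : ℝ) (hc : 1 ≤ c) : (r / c) ^ p ≤ c ^ 2 * r ^ p := by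
  have hc0 : 0 < c := by linarith
  rw [div_eq_mul_inv, Real.mul_rpow hr.le (by positivity), Real.inv_rpow hc0.le, ← Real.rpow_neg hc0.le, mul_comm]
  gcongr
  rw [← Real.rpow_natCast]
  exact Real.rpow_le_rpow_of_exponent_le hc (by push_cast; linarith)

lemma pkg_tail {Y K h e a : ℝ} (hY1 : 1 < Y) (hY2 : Y < 2) (hK : 0 ≤ K) (hh : 0 < h) (he : 0 < e)
    (hhe : h ≤ e ^ 2) (ha : |a| ≤ e / 8) {lam : Measure ℝ} [IsProbabilityMeasure lam] {ρ : ℝ → ℂ}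
    (hcf : ∀ u, charFun lam u = Complex.exp (Complex.I * a * u + ρ u))
    (hρ : ∀ u, ‖ρ u‖ ≤ K * h * |u| ^ Y + K * h ^ (2 - Y / 2) * u ^ 2) (r : ℝ) (hr : e / 4 ≤ r) :
    lam.real {x | r < |x|} ≤ (1280 * K * h) * r ^ (-Y) := by
  have hr0 : 0 < r := by linarith
  have h1 := tail_cf_shift (r := r / 2) hY1 hY2 (by positivity) (by positivity) hcf hρ (by linarith)
  have h2 : lam.real {x | r < |x|} ≤ lam.real {x | r / 2 < |x - a|} := by
    refine measureReal_mono (fun x hx => ?_) (measure_ne_top _ _)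
    have hx : r < |x| := hx
    have := abs_sub_abs_le_abs_sub x a
    show r / 2 < |x - a|
    linarith
  refine h2.trans (h1.trans ?_)
  have h3 : (r / 2) ^ (-Y) ≤ 4 * r ^ (-Y) := by
    have := rpow_half_neg hr0 (p := -Y) (by linarith) 2 (by norm_num)
    linarith
  have h4 : h ^ (2 - Y / 2) * (r / 2)⁻¹ ^ 2 ≤ h * (64 * r ^ (-Y)) := by
    have h5 : h ^ (2 - Y / 2) = h * h ^ (1 - Y / 2) := by
      rw [show (2 - Y / 2 : ℝ) = 1 + (1 - Y / 2) by ring, Real.rpow_add hh, Real.rpow_one]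
    have h6 : h ^ (1 - Y / 2) ≤ 16 * r ^ (2 - Y) := by
      calc h ^ (1 - Y / 2) ≤ ((4 * r) ^ 2) ^ (1 - Y / 2) :=
            Real.rpow_le_rpow hh.le (hhe.trans (by gcongr; linarith)) (by linarith)
        _ = (4 * r) ^ (2 - Y) := by
          rw [← Real.rpow_natCast, ← Real.rpow_mul (by positivity)]; congr 1; push_cast; ring
        _ = 4 ^ (2 - Y) * r ^ (2 - Y) := Real.mul_rpow (by norm_num) hr0.le
        _ ≤ 4 ^ (2:ℝ) * r ^ (2 - Y) := by
          gcongr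
          · norm_num
          · linarith
        _ = _ := by norm_num
    have h7 : r ^ (2 - Y) = r ^ 2 * r ^ (-Y) := by
      rw [show (2 - Y : ℝ) = 2 + -Y by ring, Real.rpow_add hr0]; norm_num
    rw [h5]
    calc h * h ^ (1 - Y / 2) * (r / 2)⁻¹ ^ 2 ≤ h * (16 * (r ^ 2 * r ^ (-Y))) * (r / 2)⁻¹ ^ 2 := by
          rw [← h7]; gcongr
      _ = _ := by field_simp; ring
  have h8 := mul_le_mul_of_nonneg_left h3 (show 0 ≤ K * h by positivity)
  have h9 := mul_le_mul_of_nonneg_left h4 hK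
  have h10 : 0 ≤ K * h * r ^ (-Y) := by positivity
  nlinarith

lemma prod_pointwise {w z e : ℝ} (he : 0 < e) :
    |{y : ℝ | e < |y|}.indicator (fun y => y) (w + z)| ≤ (2 / e) ^ 6 * |w| ^ 7
      + |w| * {z : ℝ | e / 4 < |z|}.indicator (fun _ => (1:ℝ)) z
      + (2 / e) ^ 6 * (|w| ^ 6 * |z|) + {z : ℝ | e / 4 < |z|}.indicator (fun z => |z|) z := by
  have n1 : 0 ≤ {z : ℝ | e / 4 < |z|}.indicator (fun _ => (1:ℝ)) z := indicator_nonneg (fun _ _ => zero_le_one) z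
  have n2 : 0 ≤ {z : ℝ | e / 4 < |z|}.indicator (fun z => |z|) z := indicator_nonneg (fun _ _ => abs_nonneg _) z
  by_cases h : e < |w + z|
  · rw [indicator_of_mem (by exact h)]
    have h1 := abs_add_le w z
    by_cases hw : e / 2 < |w|
    · have h2 : 1 ≤ (2 / e) ^ 6 * |w| ^ 6 := by
        rw [← mul_pow]
        apply one_le_pow₀
        rw [div_mul_eq_mul_div, le_div_iff₀ he]; linarith
      have h3 := mul_le_mul_of_nonneg_right h2 (show 0 ≤ |w| + |z| by positivity)
      have : 0 ≤ |w| * {z : ℝ | e / 4 < |z|}.indicator (fun _ => (1:ℝ)) z := by positivity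
      have e1 : (2 / e) ^ 6 * |w| ^ 6 * (|w| + |z|) = (2 / e) ^ 6 * |w| ^ 7 + (2 / e) ^ 6 * (|w| ^ 6 * |z|) := by ring
      linarith
    · push Not at hw
      have hz : e / 4 < |z| := by linarith
      rw [indicator_of_mem (by exact hz), indicator_of_mem (by exact hz)]
      have : 0 ≤ (2 / e) ^ 6 * |w| ^ 7 := by positivity
      have : 0 ≤ (2 / e) ^ 6 * (|w| ^ 6 * |z|) := by positivity
      linarith
  · rw [indicator_of_notMem (by exact h), abs_zero]; positivity

lemma pkg {Y K σ : ℝ} (hY1 : 1 < Y) (hY2 : Y < 2) (hK : 0 ≤ K) (hσ : 0 < σ) :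
    ∃ C, 0 ≤ C ∧ ∀ (h e a : ℝ) (v : ℝ≥0) (lam : Measure ℝ) (ρ : ℝ → ℂ), IsProbabilityMeasure lam →
      0 < h → 0 < e → e ≤ 1 → h ≤ e ^ 2 → σ ^ 2 * h / 2 ≤ v → v ≤ σ ^ 2 * h → |a| ≤ e / 8 →
      (∀ u, charFun lam u = Complex.exp (Complex.I * a * u + ρ u)) →
      (∀ u, ‖ρ u‖ ≤ K * h * |u| ^ Y + K * h ^ (2 - Y / 2) * u ^ 2) →
      Integrable (fun y => |y|) (gaussianReal 0 v ∗ lam) ∧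
      ∫ y, |y| ∂(gaussianReal 0 v ∗ lam) ≤ C * e ∧
      (∀ d, 0 ≤ d → d ≤ e / 4 → (gaussianReal 0 v ∗ lam).real {y | |(|y| - e)| ≤ d} ≤
        d * (C * ((Real.sqrt h)⁻¹ * (h / e ^ 2) ^ 3 + Real.sqrt h * e ^ (-Y)))) ∧
      |∫ y, {y : ℝ | |y| ≤ e}.indicator (fun y => y) y ∂(gaussianReal 0 v ∗ lam)| ≤
        |a| + C * (e * (h / e ^ 2) ^ 3 + h * e ^ (1 - Y)) := by
  obtain ⟨M1, hM1, g1⟩ := gauss_mom 1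
  obtain ⟨M6, hM6, g6⟩ := gauss_mom 6
  obtain ⟨M7, hM7, g7⟩ := gauss_mom 7
  have hY0 : 0 < Y - 1 := by linarith
  set C1 := Y / (Y - 1) * (1280 * K) * 16 with hC1
  have hC10 : 0 ≤ C1 := by have : 0 < Y := by linarith
                           positivity
  set Ca := M1 * σ + 1 + C1
  set Cb := 4 * (2 / σ) * (3072 * σ ^ 6 + 20480 * K)
  set Cc := 64 * M7 * σ ^ 7 + M1 * σ * (20480 * K) + 64 * M6 * σ ^ 6 * (1 + C1) + C1
  have hCa : 0 ≤ Ca := by positivity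
  have hCb : 0 ≤ Cb := by positivity
  have hCc : 0 ≤ Cc := by positivity
  refine ⟨Ca + Cb + Cc, by positivity, ?_⟩
  intro h e a v lam ρ hprob hh he he1 hhe hv1 hv2 ha hcf hρ
  have htail := pkg_tail hY1 hY2 hK hh he hhe ha hcf hρ
  have hv0 : (0:ℝ) < v := lt_of_lt_of_le (by positivity) hv1
  have hvne : v ≠ 0 := by rintro rfl; simp at hv0
  -- elementary facts
  have sh : 0 < Real.sqrt h := Real.sqrt_pos.mpr hh
  have shsq : Real.sqrt h * Real.sqrt h = h := Real.mul_self_sqrt hh.le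
  have she : Real.sqrt h ≤ e := by rw [Real.sqrt_le_left he.le]; exact hhe
  have sv : Real.sqrt v ≤ σ * Real.sqrt h := by
    rw [Real.sqrt_le_left (by positivity), mul_pow, Real.sq_sqrt hh.le]; exact hv2
  have sv0 : 0 < Real.sqrt v := Real.sqrt_pos.mpr hv0
  have sv' : (Real.sqrt v)⁻¹ ≤ 2 / σ * (Real.sqrt h)⁻¹ := by
    have : σ / 2 * Real.sqrt h ≤ Real.sqrt v := by
      apply Real.le_sqrt_of_sq_le
      rw [mul_pow, Real.sq_sqrt hh.le]; nlinarith
    calc (Real.sqrt v)⁻¹ ≤ (σ / 2 * Real.sqrt h)⁻¹ := by gcongr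
      _ = _ := by field_simp
  have eY : e ^ (1 - Y) = e * e ^ (-Y) := by
    rw [show (1 - Y : ℝ) = 1 + -Y by ring, Real.rpow_add he, Real.rpow_one]
  have heY : h * e ^ (1 - Y) ≤ e := by
    have : e ^ (1 - Y) ≤ e ^ (-1:ℝ) := Real.rpow_le_rpow_of_exponent_ge he he1 (by linarith)
    rw [Real.rpow_neg_one] at this
    calc h * e ^ (1 - Y) ≤ e ^ 2 * e⁻¹ := by gcongr
      _ = e := by field_simp
  -- lam facts
  obtain ⟨it, ht⟩ := first_moment_tail (R := e / 4) hY1 (by positivity) (by positivity) htail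
  have ht' : ∫ x, {x : ℝ | e / 4 < |x|}.indicator (fun x => |x|) x ∂lam ≤ C1 * (h * e ^ (1 - Y)) := by
    refine ht.trans ?_
    have := rpow_half_neg he (p := 1 - Y) (by linarith) 4 (by norm_num)
    have hY : 0 < Y := by linarith
    calc _ ≤ Y / (Y - 1) * (1280 * K * h) * (4 ^ 2 * e ^ (1 - Y)) := by gcongr
      _ = _ := by rw [hC1]; ring
  have hP4 : lam.real {z | e / 4 < |z|} ≤ 20480 * K * (h * e ^ (-Y)) := by
    refine (htail _ le_rfl).trans ?_
    have := rpow_half_neg he (p := -Y) (by linarith) 4 (by norm_num)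
    calc _ ≤ 1280 * K * h * (4 ^ 2 * e ^ (-Y)) := by gcongr
      _ = _ := by ring
  have hzle : ∀ z : ℝ, |z| ≤ e / 4 + {x : ℝ | e / 4 < |x|}.indicator (fun x => |x|) z := by
    intro z
    rw [indicator_apply]; split_ifs with hz
    · linarith
    · simp only [mem_setOf_eq, not_lt] at hz; linarith
  have iz : Integrable (fun z => |z|) lam := by
    refine ((integrable_const (e / 4)).add it).mono' (by fun_prop) (ae_of_all _ fun z => ?_)
    rw [Real.norm_of_nonneg (abs_nonneg z)]; exact hzle z
  have iz' : Integrable (fun z => z) lam := by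
    refine iz.mono' (by fun_prop) (ae_of_all _ fun z => le_rfl)
  have hEz : ∫ z, |z| ∂lam ≤ (1 + C1) * e := by
    have := integral_mono iz ((integrable_const (e / 4)).add it) hzle
    simp only [Pi.add_apply] at this
    rw [integral_add (integrable_const _) it] at this
    simp at this
    have := mul_le_mul_of_nonneg_left heY hC10
    linarith
  have hmean := mean_cf hY1 hY2 (by positivity) (by positivity) hcf hρ iz'
  obtain ⟨iw1, ew1⟩ := g1 v
  obtain ⟨iw6, ew6⟩ := g6 v
  obtain ⟨iw7, ew7⟩ := g7 v
  simp only [pow_one] at iw1 ew1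
  have iw : Integrable (fun w => w) (gaussianReal 0 v) := iw1.mono' (by fun_prop) (ae_of_all _ fun z => le_rfl)
  have isum : Integrable (fun p : ℝ × ℝ => |p.1| + |p.2|) ((gaussianReal 0 v).prod lam) :=
    (iw1.comp_fst lam).add (iz.comp_snd (gaussianReal 0 v))
  have iabs : Integrable (fun y => |y|) (gaussianReal 0 v ∗ lam) := by
    rw [Measure.conv, integrable_map_measure (by fun_prop) (by fun_prop)]
    refine isum.mono' (by fun_prop) (ae_of_all _ fun p => ?_)
    simp only [Function.comp]
    rw [Real.norm_eq_abs, abs_abs]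
    exact abs_add_le _ _
  have iid : Integrable (fun y => y) (gaussianReal 0 v ∗ lam) := iabs.mono' (by fun_prop) (ae_of_all _ fun z => le_rfl)
  refine ⟨iabs, ?_, ?_, ?_⟩
  · have h1 : ∫ y, |y| ∂(gaussianReal 0 v ∗ lam) ≤ ∫ p : ℝ × ℝ, |p.1| + |p.2| ∂((gaussianReal 0 v).prod lam) := by
      rw [Measure.conv, integral_map (by fun_prop) (by fun_prop)]
      refine integral_mono_of_nonneg (ae_of_all _ fun p => abs_nonneg _) isum (ae_of_all _ fun p => abs_add_le _ _)
    rw [integral_add (iw1.comp_fst lam) (iz.comp_snd (gaussianReal 0 v)), integral_fun_fst (f := fun w : ℝ => |w|),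
      integral_fun_snd (f := fun z : ℝ => |z|), ew1] at h1
    simp only [probReal_univ, one_smul] at h1
    have h2 : M1 * Real.sqrt v ≤ M1 * σ * e := by
      calc M1 * Real.sqrt v ≤ M1 * (σ * Real.sqrt h) := by gcongr
        _ ≤ M1 * (σ * e) := by gcongr
        _ = _ := by ring
    have h3 : Ca * e ≤ (Ca + Cb + Cc) * e := by gcongr; linarith
    have h4 : Ca * e = M1 * σ * e + (1 + C1) * e := by simp only [Ca]; ring
    linarith
  · intro d hd hde
    refine (boundary_conv hvne lam he hd hde).trans ?_
    have h1 : Real.exp (-(e ^ 2 / (8 * v))) ≤ 3072 * σ ^ 6 * (h / e ^ 2) ^ 3 := by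
      refine (exp_poly (by positivity)).trans ?_
      calc 6 / (e ^ 2 / (8 * (v:ℝ))) ^ 3 = 3072 * (v / e ^ 2) ^ 3 := by field_simp; norm_num
        _ ≤ 3072 * (σ ^ 2 * h / e ^ 2) ^ 3 := by gcongr
        _ = _ := by field_simp
    set γ := (h / e ^ 2) ^ 3 with hγ
    have hγ0 : 0 ≤ γ := by positivity
    have hE : 0 < e ^ (-Y) := by positivity
    calc 4 * d * ((Real.sqrt v)⁻¹ * (Real.exp (-(e ^ 2 / (8 * v))) + lam.real {z | e / 4 < |z|}))
        ≤ 4 * d * ((2 / σ * (Real.sqrt h)⁻¹) * (3072 * σ ^ 6 * γ + 20480 * K * (h * e ^ (-Y)))) := by gcongr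
      _ = d * (4 * (2 / σ) * ((3072 * σ ^ 6) * ((Real.sqrt h)⁻¹ * γ) + 20480 * K * (((Real.sqrt h)⁻¹ * h) * e ^ (-Y)))) := by ring
      _ = d * (4 * (2 / σ) * ((3072 * σ ^ 6) * ((Real.sqrt h)⁻¹ * γ) + 20480 * K * (Real.sqrt h * e ^ (-Y)))) := by
          rw [show (Real.sqrt h)⁻¹ * h = Real.sqrt h by rw [inv_mul_eq_div, Real.div_sqrt]]
      _ ≤ d * (4 * (2 / σ) * ((3072 * σ ^ 6 + 20480 * K) * ((Real.sqrt h)⁻¹ * γ) + (3072 * σ ^ 6 + 20480 * K) * (Real.sqrt h * e ^ (-Y)))) := by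
          gcongr
          · have : 0 ≤ 20480 * K := by positivity
            linarith
          · have : 0 ≤ 3072 * σ ^ 6 := by positivity
            linarith
      _ = d * (Cb * ((Real.sqrt h)⁻¹ * γ + Real.sqrt h * e ^ (-Y))) := by simp only [Cb]; ring
      _ ≤ _ := by gcongr; linarith
  · have hSm : MeasurableSet {y : ℝ | e < |y|} := measurableSet_lt measurable_const (by fun_prop)
    have hTm : MeasurableSet {z : ℝ | e / 4 < |z|} := measurableSet_lt measurable_const (by fun_prop)
    have hid : ∀ y : ℝ, {y : ℝ | |y| ≤ e}.indicator (fun y => y) y = y - {y : ℝ | e < |y|}.indicator (fun y => y) y := by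
      intro y
      by_cases hy : e < |y|
      · rw [indicator_of_notMem (by simpa using hy), indicator_of_mem (by exact hy)]; ring
      · rw [indicator_of_mem (by simpa using hy), indicator_of_notMem (by exact hy)]; ring
    simp_rw [hid]
    have iin : Integrable (fun y => {y : ℝ | e < |y|}.indicator (fun y => y) y) (gaussianReal 0 v ∗ lam) := iid.indicator hSm
    rw [integral_sub iid iin]
    have hm0 : ∫ y, y ∂(gaussianReal 0 v ∗ lam) = a := by
      rw [Measure.conv, integral_map (by fun_prop) (by fun_prop), integral_add (iw.comp_fst lam) (iz'.comp_snd (gaussianReal 0 v)),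
        integral_fun_fst (f := fun w : ℝ => w), integral_fun_snd (f := fun w : ℝ => w), hmean, integral_id_gaussianReal]
      simp
    rw [hm0]
    refine (abs_sub _ _).trans ?_
    gcongr
    have meas1 : Measurable (fun y => {y : ℝ | e < |y|}.indicator (fun y => y) y) := measurable_id.indicator hSm
    have j1 := (iw7.const_mul ((2 / e) ^ 6)).comp_fst lam
    have iind : Integrable (fun z => {z : ℝ | e / 4 < |z|}.indicator (fun _ => (1:ℝ)) z) lam := (integrable_const 1).indicator hTm
    have j2 := iw1.mul_prod iind
    have j3 := (iw6.mul_prod iz).const_mul ((2 / e) ^ 6)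
    have j4 := it.comp_snd (gaussianReal 0 v)
    have hfin : |∫ y, {y : ℝ | e < |y|}.indicator (fun y => y) y ∂(gaussianReal 0 v ∗ lam)| ≤
        (2 / e) ^ 6 * (M7 * Real.sqrt v ^ 7) + (M1 * Real.sqrt v) * lam.real {z | e / 4 < |z|}
        + (2 / e) ^ 6 * ((M6 * Real.sqrt v ^ 6) * ∫ z, |z| ∂lam)
        + ∫ x, {x : ℝ | e / 4 < |x|}.indicator (fun x => |x|) x ∂lam := by
      rw [Measure.conv, integral_map (by fun_prop) meas1.aestronglyMeasurable]
      have := norm_integral_le_of_norm_le (f := fun p : ℝ × ℝ => {y : ℝ | e < |y|}.indicator (fun y => y) (p.1 + p.2)) (((j1.add j2).add j3).add j4) (ae_of_all _ fun p : ℝ × ℝ => prod_pointwise (w := p.1) (z := p.2) he)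
      refine this.trans (le_of_eq ?_)
      rw [integral_add' ((j1.add j2).add j3) j4, integral_add' (j1.add j2) j3, integral_add' j1 j2,
        integral_fun_fst (f := fun w : ℝ => (2 / e) ^ 6 * |w| ^ 7),
        integral_prod_mul (f := fun w : ℝ => |w|) (g := fun z => {z : ℝ | e / 4 < |z|}.indicator (fun _ => (1:ℝ)) z),
        integral_const_mul, integral_const_mul,
        integral_prod_mul (f := fun w : ℝ => |w| ^ 6) (g := fun z => |z|),
        integral_fun_snd (f := fun z => {x : ℝ | e / 4 < |x|}.indicator (fun x => |x|) z), ew1, ew6, ew7,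
        integral_indicator_const _ hTm]
      simp
    refine hfin.trans ?_
    set γ := (h / e ^ 2) ^ 3 with hγ
    have hγ0 : 0 ≤ γ := by positivity
    have hE : 0 < e ^ (-Y) := by positivity
    have hs6 : Real.sqrt h ^ 6 = h ^ 3 := by
      rw [show Real.sqrt h ^ 6 = (Real.sqrt h * Real.sqrt h) ^ 3 by ring, shsq]
    have b6 : (2 / e) ^ 6 * Real.sqrt v ^ 6 ≤ 64 * σ ^ 6 * γ := by
      calc (2 / e) ^ 6 * Real.sqrt v ^ 6 ≤ (2 / e) ^ 6 * (σ * Real.sqrt h) ^ 6 := by gcongr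
        _ = 64 * σ ^ 6 * (h / e ^ 2) ^ 3 := by rw [mul_pow, hs6]; field_simp; norm_num
    have b7 : (2 / e) ^ 6 * (M7 * Real.sqrt v ^ 7) ≤ 64 * M7 * σ ^ 7 * (e * γ) := by
      calc (2 / e) ^ 6 * (M7 * Real.sqrt v ^ 7) = M7 * ((2 / e) ^ 6 * Real.sqrt v ^ 6) * Real.sqrt v := by ring
        _ ≤ M7 * (64 * σ ^ 6 * γ) * (σ * e) := by
          gcongr
          exact sv.trans (by gcongr)
        _ = _ := by ring
    have b1 : (M1 * Real.sqrt v) * lam.real {z | e / 4 < |z|} ≤ M1 * σ * (20480 * K) * (h * e ^ (1 - Y)) := by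
      calc (M1 * Real.sqrt v) * lam.real {z | e / 4 < |z|} ≤ (M1 * (σ * e)) * (20480 * K * (h * e ^ (-Y))) := by
            gcongr
            exact sv.trans (by gcongr)
        _ = _ := by rw [eY]; ring
    have b6' : (2 / e) ^ 6 * ((M6 * Real.sqrt v ^ 6) * ∫ z, |z| ∂lam) ≤ 64 * M6 * σ ^ 6 * (1 + C1) * (e * γ) := by
      calc (2 / e) ^ 6 * ((M6 * Real.sqrt v ^ 6) * ∫ z, |z| ∂lam) = M6 * ((2 / e) ^ 6 * Real.sqrt v ^ 6) * ∫ z, |z| ∂lam := by ring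
        _ ≤ M6 * (64 * σ ^ 6 * γ) * ((1 + C1) * e) := by gcongr
        _ = _ := by ring
    have p1 : 0 ≤ e * γ := by positivity
    have p2 : 0 ≤ h * e ^ (1 - Y) := by positivity
    set s1 := e * γ
    set s2 := h * e ^ (1 - Y)
    calc _ ≤ 64 * M7 * σ ^ 7 * s1 + M1 * σ * (20480 * K) * s2 + 64 * M6 * σ ^ 6 * (1 + C1) * s1 + C1 * s2 := by linarith
      _ ≤ 64 * M7 * σ ^ 7 * (s1 + s2) + M1 * σ * (20480 * K) * (s1 + s2) + 64 * M6 * σ ^ 6 * (1 + C1) * (s1 + s2) + C1 * (s1 + s2) := by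
          gcongr <;> linarith
      _ = Cc * (s1 + s2) := by simp only [Cc]; ring
      _ ≤ _ := by gcongr; linarith

lemma gauss_pdf_fourier {v : ℝ≥0} (hv : v ≠ 0) (w : ℝ) :
    ((gaussianPDFReal 0 v w : ℝ) : ℂ) = (2 * π : ℂ)⁻¹ *
      ∫ u : ℝ, Complex.exp (-(Complex.I * u * w)) * ((Real.exp (-(v / 2) * u ^ 2) : ℝ) : ℂ) := by
  have hv' : (0:ℝ) < v := by positivity
  have h := fourierIntegral_gaussian (b := ((v / 2 : ℝ) : ℂ)) (by rw [Complex.ofReal_re]; positivity) (-(w:ℂ))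
  have e1 : ∀ u : ℝ, Complex.exp (-(Complex.I * u * w)) * ((Real.exp (-(v / 2) * u ^ 2) : ℝ) : ℂ) =
      Complex.exp (Complex.I * (-(w:ℂ)) * u) * Complex.exp (-((v / 2 : ℝ) : ℂ) * (u:ℂ) ^ 2) := by
    intro u; push_cast; congr 2; ring
  simp_rw [e1]
  rw [h]
  have e2 : ((π:ℂ) / ((v / 2 : ℝ):ℂ)) ^ ((1:ℂ) / 2) = ((Real.sqrt (π / (v / 2)) : ℝ) : ℂ) := by
    rw [Real.sqrt_eq_rpow, Complex.ofReal_cpow (by positivity)]; push_cast; rfl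
  rw [e2, gaussianPDFReal]
  have e3 : Complex.exp (-(-(w:ℂ)) ^ 2 / (4 * ((v / 2 : ℝ):ℂ))) = ((Real.exp (-(w - 0) ^ 2 / (2 * v)) : ℝ) : ℂ) := by
    push_cast; congr 1; field_simp; ring
  rw [e3, ← mul_assoc]
  push_cast
  congr 1
  have e4 : (Real.sqrt (2 * π * v))⁻¹ = (2 * π)⁻¹ * Real.sqrt (π / (v / 2)) := by
    have h1 : π / (v / 2) = (2 * π) ^ 2 / (2 * π * v) := by field_simp
    rw [h1, Real.sqrt_div (by positivity), Real.sqrt_sq (by positivity)]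
    field_simp
  exact_mod_cast e4

def Ghat (f : ℝ → ℝ) (u : ℝ) : ℂ := (2 * π : ℂ)⁻¹ * ∫ y : ℝ, (f y : ℂ) * Complex.exp (-(Complex.I * u * y))

lemma Ghat_meas {f : ℝ → ℝ} (hf : Measurable f) : Measurable (Ghat f) := by
  unfold Ghat
  apply Measurable.const_mul
  apply StronglyMeasurable.measurable
  apply StronglyMeasurable.integral_prod_right (f := fun u y : ℝ => (f y : ℂ) * Complex.exp (-(Complex.I * u * y)))
  apply Measurable.stronglyMeasurable
  simp only [Function.uncurry_def]
  fun_prop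

lemma norm_exp_I (u w : ℝ) : ‖Complex.exp (-(Complex.I * u * w))‖ = 1 := by
  rw [Complex.norm_exp]; simp

lemma norm_exp_I' (u w : ℝ) : ‖Complex.exp (Complex.I * u * w)‖ = 1 := by
  rw [Complex.norm_exp]; simp

lemma Ghat_bound {f : ℝ → ℝ} (hi : Integrable f) (u : ℝ) : ‖Ghat f u‖ ≤ (2 * π)⁻¹ * ∫ y, |f y| := by
  unfold Ghat
  rw [norm_mul]
  have : ‖(2 * π : ℂ)⁻¹‖ = (2 * π)⁻¹ := by
    rw [norm_inv, norm_mul]; simp [abs_of_pos Real.pi_pos]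
  rw [this]
  gcongr
  refine norm_integral_le_of_norm_le hi.abs (ae_of_all _ fun y => ?_)
  rw [norm_mul, norm_exp_I, mul_one, Complex.norm_real, Real.norm_eq_abs]

lemma gauss_fourier1 {v : ℝ≥0} (hv : v ≠ 0) {f : ℝ → ℝ} (hf : Measurable f) (hi : Integrable f) (s : ℝ) :
    ((∫ w, f (w + s) ∂(gaussianReal 0 v) : ℝ) : ℂ) =
      ∫ u : ℝ, Ghat f u * ((Real.exp (-(v / 2) * u ^ 2) : ℝ) : ℂ) * Complex.exp (Complex.I * u * s) := by
  have hv' : (0:ℝ) < v := by positivity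
  rw [integral_gaussianReal_eq_integral_smul hv]
  have h1 : ∫ w, gaussianPDFReal 0 v w • f (w + s) = ∫ y, gaussianPDFReal 0 v (y - s) * f y := by
    rw [← integral_add_right_eq_self (fun y => gaussianPDFReal 0 v (y - s) * f y) s]
    simp
  rw [h1, ← integral_complex_ofReal]
  have ig : Integrable (fun u : ℝ => Real.exp (-(v / 2) * u ^ 2)) := integrable_exp_neg_mul_sq (by positivity)
  have h2 : ∀ y : ℝ, ((gaussianPDFReal 0 v (y - s) * f y : ℝ) : ℂ) =
      ∫ u : ℝ, (2 * π : ℂ)⁻¹ * ((f y : ℂ) * Complex.exp (-(Complex.I * u * y))) *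
        (((Real.exp (-(v / 2) * u ^ 2) : ℝ) : ℂ) * Complex.exp (Complex.I * u * s)) := by
    intro y
    rw [Complex.ofReal_mul, gauss_pdf_fourier hv, mul_assoc, mul_comm _ (f y : ℂ), ← mul_assoc, ← integral_const_mul]
    congr 1; ext u
    have : Complex.exp (-(Complex.I * u * ((y - s : ℝ) : ℂ))) = Complex.exp (-(Complex.I * u * y)) * Complex.exp (Complex.I * u * s) := by
      rw [← Complex.exp_add]; congr 1; push_cast; ring
    rw [this]; ring
  simp_rw [h2]
  rw [integral_integral_swap]
  · congr 1; ext u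
    rw [integral_mul_const, integral_const_mul, Ghat]; ring
  · have j : Integrable (fun p : ℝ × ℝ => |f p.1| * Real.exp (-(v / 2) * p.2 ^ 2)) := hi.abs.mul_prod ig
    refine (j.const_mul (2 * π)⁻¹).mono' (by apply Measurable.aestronglyMeasurable; simp only [Function.uncurry_def]; fun_prop)
      (ae_of_all _ fun p => le_of_eq ?_)
    simp only [Function.uncurry_def]
    rw [norm_mul, norm_mul, norm_mul, norm_mul, norm_exp_I, norm_exp_I', Complex.norm_real, Complex.norm_real,
      Real.norm_of_nonneg (Real.exp_pos _).le, Real.norm_eq_abs]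
    have : ‖(2 * π : ℂ)⁻¹‖ = (2 * π)⁻¹ := by
      rw [norm_inv, norm_mul]; simp [abs_of_pos Real.pi_pos]
    rw [this]; ring

lemma gauss_fourier {v : ℝ≥0} (hv : v ≠ 0) {f : ℝ → ℝ} (hf : Measurable f) (hi : Integrable f) {B : ℝ}
    (hB : ∀ y, |f y| ≤ B) (lam : Measure ℝ) [IsProbabilityMeasure lam] (x : ℝ) :
    ((∫ y, f (y + x) ∂(gaussianReal 0 v ∗ lam) : ℝ) : ℂ) =
      ∫ u : ℝ, Ghat f u * ((Real.exp (-(v / 2) * u ^ 2) : ℝ) : ℂ) * Complex.exp (Complex.I * u * x) * charFun lam u := by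
  have hv' : (0:ℝ) < v := by positivity
  have hm := Ghat_meas hf
  have ig : Integrable (fun u : ℝ => Real.exp (-(v / 2) * u ^ 2)) := integrable_exp_neg_mul_sq (by positivity)
  rw [Measure.conv, integral_map (by fun_prop) (by apply Measurable.aestronglyMeasurable; fun_prop)]
  have i0 : Integrable (fun p : ℝ × ℝ => f (p.1 + p.2 + x)) ((gaussianReal 0 v).prod lam) := by
    refine (integrable_const B).mono' (by apply Measurable.aestronglyMeasurable; fun_prop) (ae_of_all _ fun p => hB _)
  rw [integral_prod_symm _ i0, ← integral_complex_ofReal]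
  simp_rw [add_assoc]
  simp_rw [gauss_fourier1 hv hf hi]
  rw [integral_integral_swap]
  · congr 1; ext u
    have : ∀ z : ℝ, Ghat f u * ((Real.exp (-(v / 2) * u ^ 2) : ℝ) : ℂ) * Complex.exp (Complex.I * u * ((z + x : ℝ) : ℂ)) =
        (Ghat f u * ((Real.exp (-(v / 2) * u ^ 2) : ℝ) : ℂ) * Complex.exp (Complex.I * u * x)) * Complex.exp (u * z * Complex.I) := by
      intro z
      have : Complex.exp (Complex.I * u * ((z + x : ℝ) : ℂ)) = Complex.exp (Complex.I * u * x) * Complex.exp (u * z * Complex.I) := by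
        rw [← Complex.exp_add]; congr 1; push_cast; ring
      rw [this]; ring
    simp_rw [this]
    rw [integral_const_mul, charFun_apply_real]
  · have j : Integrable (fun p : ℝ × ℝ => (1:ℝ) * Real.exp (-(v / 2) * p.2 ^ 2)) (lam.prod volume) := (integrable_const (1:ℝ)).mul_prod ig
    refine (j.const_mul ((2 * π)⁻¹ * ∫ y, |f y|)).mono' (by apply Measurable.aestronglyMeasurable; simp only [Function.uncurry_def]; fun_prop)
      (ae_of_all _ fun p => ?_)
    simp only [Function.uncurry_def]
    rw [norm_mul, norm_mul, norm_exp_I', Complex.norm_real,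
      Real.norm_of_nonneg (Real.exp_pos _).le, mul_one, one_mul]
    gcongr
    exact Ghat_bound hi _

lemma inner_bound {v : ℝ≥0} (hv : v ≠ 0) {f : ℝ → ℝ} (hf : Measurable f) (hi : Integrable f) {B : ℝ}
    (hB : ∀ y, |f y| ≤ B) {κ g : ℝ → ℝ} (hκ : Measurable κ) (hκi : Integrable (fun x => |x| * |κ x|))
    (lam : Measure ℝ) [IsProbabilityMeasure lam]
    (hg : ∀ x, |∫ y, f (y + x) ∂(gaussianReal 0 v ∗ lam) - ∫ y, f y ∂(gaussianReal 0 v ∗ lam)| ≤ g x)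
    (hgi : Integrable (fun x => |κ x| * g x)) :
    ‖∫ u : ℝ, Ghat f u * ((Real.exp (-(v / 2) * u ^ 2) : ℝ) : ℂ) * (chi κ u * charFun lam u)‖ ≤ ∫ x, |κ x| * g x := by
  have hv' : (0:ℝ) < v := by positivity
  have hm := Ghat_meas hf
  have hcm := measurable_charFun (μ := lam)
  set H : ℝ → ℂ := fun u => Ghat f u * ((Real.exp (-(v / 2) * u ^ 2) : ℝ) : ℂ) with hH
  clear_value H
  have hHm : Measurable H := by rw [hH]; fun_prop
  set G := (2 * π)⁻¹ * ∫ y, |f y| with hG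
  have hG0 : 0 ≤ G := by
    have : 0 ≤ ∫ y, |f y| := integral_nonneg fun y => abs_nonneg _
    positivity
  have hHb : ∀ u, ‖H u‖ ≤ G * Real.exp (-(v / 2) * u ^ 2) := by
    intro u
    simp only [hH]
    rw [norm_mul, Complex.norm_real, Real.norm_of_nonneg (Real.exp_pos _).le]
    gcongr
    exact Ghat_bound hi _
  have ig : Integrable (fun u : ℝ => Real.exp (-(v / 2) * u ^ 2)) := integrable_exp_neg_mul_sq (by positivity)
  have ig1 : Integrable (fun u : ℝ => |u| * Real.exp (-(v / 2) * u ^ 2)) := by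
    have := (integrable_mul_exp_neg_mul_sq (show (0:ℝ) < v / 2 by positivity)).norm
    refine this.congr (ae_of_all _ fun u => ?_)
    simp only [norm_mul, Real.norm_eq_abs, Real.abs_exp]
  have ic : ∀ x : ℝ, Integrable (fun u : ℝ => H u * Complex.exp (Complex.I * u * x) * charFun lam u) := by
    intro x
    refine (ig.const_mul G).mono' (by apply Measurable.aestronglyMeasurable; fun_prop) (ae_of_all _ fun u => ?_)
    rw [norm_mul, norm_mul, norm_exp_I', mul_one]
    calc _ ≤ ‖H u‖ * 1 := by gcongr; exact norm_charFun_le_one _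
      _ ≤ _ := by rw [mul_one]; exact hHb u
  have ic' := ic
  simp only [hH] at ic'
  have e1 : ∫ u : ℝ, H u * (chi κ u * charFun lam u) =
      ∫ u : ℝ, ∫ x : ℝ, (H u * charFun lam u) * ((Complex.exp (Complex.I * u * x) - 1) * (κ x : ℂ)) := by
    congr 1; ext u
    rw [integral_const_mul, chi]; ring
  have e2 : ∀ x : ℝ, ∫ u : ℝ, (H u * charFun lam u) * ((Complex.exp (Complex.I * u * x) - 1) * (κ x : ℂ)) =
      (((∫ y, f (y + x) ∂(gaussianReal 0 v ∗ lam) - ∫ y, f y ∂(gaussianReal 0 v ∗ lam)) : ℝ) : ℂ) * (κ x : ℂ) := by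
    intro x
    have h0 := gauss_fourier hv hf hi hB lam 0
    simp only [add_zero] at h0
    rw [Complex.ofReal_sub, gauss_fourier hv hf hi hB lam x, h0, ← integral_sub (ic' x) (by simpa using ic' 0), ← integral_mul_const]
    congr 1; ext u
    simp only [hH]
    simp
    ring
  have eg : ∫ u : ℝ, Ghat f u * ((Real.exp (-(v / 2) * u ^ 2) : ℝ) : ℂ) * (chi κ u * charFun lam u) =
      ∫ u : ℝ, H u * (chi κ u * charFun lam u) := by simp only [hH]
  rw [eg, e1, integral_integral_swap]
  · simp_rw [e2]
    refine norm_integral_le_of_norm_le hgi (ae_of_all _ fun x => ?_)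
    rw [norm_mul, Complex.norm_real, Complex.norm_real, Real.norm_eq_abs, Real.norm_eq_abs, mul_comm]
    gcongr; exact hg x
  · have j : Integrable (fun p : ℝ × ℝ => (|p.1| * Real.exp (-(v / 2) * p.1 ^ 2)) * (|p.2| * |κ p.2|)) := ig1.mul_prod hκi
    refine (j.const_mul G).mono' (by apply Measurable.aestronglyMeasurable; simp only [Function.uncurry_def]; fun_prop)
      (ae_of_all _ fun p => ?_)
    simp only [Function.uncurry_def]
    rw [norm_mul, norm_mul, norm_mul, Complex.norm_real (κ _), Real.norm_eq_abs]
    calc _ ≤ (G * Real.exp (-(v / 2) * p.1 ^ 2) * 1) * ((|p.1| * |p.2|) * |κ p.2|) := by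
          gcongr
          · exact hHb _
          · exact norm_charFun_le_one _
          · exact expm1_bound _ _
      _ = _ := by ring

lemma exp_ftc (a c : ℂ) : Complex.exp (a + c) - Complex.exp a = ∫ t in (0:ℝ)..1, c * Complex.exp (a + t * c) := by
  have hd : ∀ t ∈ uIcc (0:ℝ) 1, HasDerivAt (fun t : ℝ => Complex.exp (a + t * c)) (c * Complex.exp (a + t * c)) t := by
    intro t _
    have h1 : HasDerivAt (fun t : ℝ => a + (t:ℂ) * c) (1 * c) t :=
      (Complex.ofRealCLM.hasDerivAt.mul_const c).const_add a
    have := h1.cexp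
    rw [one_mul, mul_comm] at this
    exact this
  have := intervalIntegral.integral_eq_sub_of_hasDerivAt hd (by apply Continuous.intervalIntegrable; fun_prop)
  rw [this]; simp

lemma main_bound {v : ℝ≥0} (hv : v ≠ 0) {f : ℝ → ℝ} (hf : Measurable f) (hi : Integrable f) {B : ℝ}
    (hB : ∀ y, |f y| ≤ B) {κ g : ℝ → ℝ} (hκ : Measurable κ) (hκi : Integrable (fun x => |x| * |κ x|))
    {A : ℝ → ℂ} (hA : Measurable A) {h : ℝ} (hh : 0 ≤ h)
    (lam : ℝ → Measure ℝ) (hp : ∀ t ∈ Icc (0:ℝ) 1, IsProbabilityMeasure (lam t))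
    (hcf : ∀ t ∈ Icc (0:ℝ) 1, ∀ u, charFun (lam t) u = Complex.exp (A u + t * (h * chi κ u)))
    (hg : ∀ t ∈ Icc (0:ℝ) 1, ∀ x, |∫ y, f (y + x) ∂(gaussianReal 0 v ∗ lam t) - ∫ y, f y ∂(gaussianReal 0 v ∗ lam t)| ≤ g x)
    (hgi : Integrable (fun x => |κ x| * g x)) :
    |∫ y, f y ∂(gaussianReal 0 v ∗ lam 1) - ∫ y, f y ∂(gaussianReal 0 v ∗ lam 0)| ≤ h * ∫ x, |κ x| * g x := by
  have hv' : (0:ℝ) < v := by positivity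
  have hm := Ghat_meas hf
  have hxm := chi_meas hκ
  have p0 := hp 0 (by simp)
  have p1 := hp 1 (by simp)
  set H : ℝ → ℂ := fun u => Ghat f u * ((Real.exp (-(v / 2) * u ^ 2) : ℝ) : ℂ) with hH
  clear_value H
  have hHm : Measurable H := by rw [hH]; fun_prop
  set G := (2 * π)⁻¹ * ∫ y, |f y| with hG
  have hG0 : 0 ≤ G := by
    have : 0 ≤ ∫ y, |f y| := integral_nonneg fun y => abs_nonneg _
    positivity
  have hHb : ∀ u, ‖H u‖ ≤ G * Real.exp (-(v / 2) * u ^ 2) := by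
    intro u
    simp only [hH]
    rw [norm_mul, Complex.norm_real, Real.norm_of_nonneg (Real.exp_pos _).le]
    gcongr
    exact Ghat_bound hi _
  have ig : Integrable (fun u : ℝ => Real.exp (-(v / 2) * u ^ 2)) := integrable_exp_neg_mul_sq (by positivity)
  have ig1 : Integrable (fun u : ℝ => |u| * Real.exp (-(v / 2) * u ^ 2)) := by
    have := (integrable_mul_exp_neg_mul_sq (show (0:ℝ) < v / 2 by positivity)).norm
    refine this.congr (ae_of_all _ fun u => ?_)
    simp only [norm_mul, Real.norm_eq_abs, Real.abs_exp]
  have hφ1 : ∀ t ∈ Icc (0:ℝ) 1, ∀ u, ‖Complex.exp (A u + t * (h * chi κ u))‖ ≤ 1 := by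
    intro t ht u
    have := hp t ht
    rw [← hcf t ht u]; exact norm_charFun_le_one _
  have four : ∀ t ∈ Icc (0:ℝ) 1, ((∫ y, f y ∂(gaussianReal 0 v ∗ lam t) : ℝ) : ℂ) =
      ∫ u : ℝ, H u * Complex.exp (A u + t * (h * chi κ u)) := by
    intro t ht
    have := hp t ht
    have h0 := gauss_fourier hv hf hi hB (lam t) 0
    simp only [add_zero] at h0
    rw [h0]
    congr 1; ext u
    rw [hcf t ht]; simp [hH]
  have ifour : ∀ t ∈ Icc (0:ℝ) 1, Integrable (fun u : ℝ => H u * Complex.exp (A u + t * (h * chi κ u))) := by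
    intro t ht
    refine (ig.const_mul G).mono' (by apply Measurable.aestronglyMeasurable; fun_prop) (ae_of_all _ fun u => ?_)
    rw [norm_mul]
    calc _ ≤ ‖H u‖ * 1 := by gcongr; exact hφ1 t ht u
      _ ≤ _ := by rw [mul_one]; exact hHb u
  have e1 : (((∫ y, f y ∂(gaussianReal 0 v ∗ lam 1) - ∫ y, f y ∂(gaussianReal 0 v ∗ lam 0)) : ℝ) : ℂ) =
      ∫ u : ℝ, ∫ t in Ioc (0:ℝ) 1, h * (H u * (chi κ u * Complex.exp (A u + t * (h * chi κ u)))) := by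
    rw [Complex.ofReal_sub, four 1 (by simp), four 0 (by simp), ← integral_sub (ifour 1 (by simp)) (ifour 0 (by simp))]
    congr 1; ext u
    have := exp_ftc (A u) (h * chi κ u)
    rw [intervalIntegral.integral_of_le zero_le_one] at this
    simp only [Complex.ofReal_one, one_mul, Complex.ofReal_zero, zero_mul, add_zero]
    rw [← mul_sub, this, ← integral_const_mul]
    congr 1; ext t; ring
  rw [← Real.norm_eq_abs, ← Complex.norm_real, e1, integral_integral_swap]
  · have hb : ∀ t ∈ Ioc (0:ℝ) 1, ‖∫ u : ℝ, (h:ℂ) * (H u * (chi κ u * Complex.exp (A u + t * (h * chi κ u))))‖ ≤ h * ∫ x, |κ x| * g x := by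
      intro t ht
      have ht' : t ∈ Icc (0:ℝ) 1 := ⟨ht.1.le, ht.2⟩
      have := hp t ht'
      rw [integral_const_mul, norm_mul, Complex.norm_real, Real.norm_of_nonneg hh]
      gcongr
      have := inner_bound hv hf hi hB hκ hκi (lam t) (hg t ht') hgi
      simp_rw [hcf t ht'] at this
      simp only [hH]
      exact this
    have := norm_setIntegral_le_of_norm_le_const (μ := volume) (s := Ioc (0:ℝ) 1) (by simp) hb
    simpa using this
  · have j : Integrable (fun p : ℝ × ℝ => (|p.1| * Real.exp (-(v / 2) * p.1 ^ 2)) * (1:ℝ)) (volume.prod (volume.restrict (Ioc (0:ℝ) 1))) :=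
      ig1.mul_prod (integrable_const (1:ℝ))
    refine (j.const_mul (h * G * ∫ x, |x| * |κ x|)).mono' (by apply Measurable.aestronglyMeasurable; simp only [Function.uncurry_def]; fun_prop) ?_
    have hae : ∀ᵐ p : ℝ × ℝ ∂(volume.prod (volume.restrict (Ioc (0:ℝ) 1))), p.2 ∈ Ioc (0:ℝ) 1 := by
      have := (ae_restrict_mem (μ := volume) (measurableSet_Ioc (a := (0:ℝ)) (b := 1)))
      exact Measure.quasiMeasurePreserving_snd.ae this
    filter_upwards [hae] with p hpm
    simp only [Function.uncurry_def]
    rw [norm_mul, norm_mul, norm_mul, Complex.norm_real, Real.norm_of_nonneg hh]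
    have hI : 0 ≤ ∫ x, |x| * |κ x| := integral_nonneg fun x => by positivity
    calc _ ≤ h * ((G * Real.exp (-(v / 2) * p.1 ^ 2)) * ((|p.1| * ∫ x, |x| * |κ x|) * 1)) := by
          gcongr
          · exact hHb _
          · exact chi_bound hκi _
          · exact hφ1 _ ⟨hpm.1.le, hpm.2⟩ _
      _ = _ := by ring

/-- truncated square -/
def fe (e x : ℝ) : ℝ := Set.indicator {x : ℝ | |x| ≤ e} (fun x => x ^ 2) x

lemma fe_set_meas (e : ℝ) : MeasurableSet {x : ℝ | |x| ≤ e} := measurableSet_le (by fun_prop) measurable_const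

lemma fe_meas (e : ℝ) : Measurable (fe e) := Measurable.indicator (by fun_prop) (fe_set_meas e)

lemma fe_in {e x : ℝ} (h : |x| ≤ e) : fe e x = x ^ 2 := indicator_of_mem (by exact h) _
lemma fe_out {e x : ℝ} (h : ¬ |x| ≤ e) : fe e x = 0 := indicator_of_notMem (by exact h) _

lemma fe_nonneg (e x : ℝ) : 0 ≤ fe e x := indicator_nonneg (fun _ _ => sq_nonneg _) x

lemma fe_le {e : ℝ} (he : 0 ≤ e) (x : ℝ) : fe e x ≤ e ^ 2 := by
  by_cases h : |x| ≤ e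
  · rw [fe_in h]; exact sq_le_sq' (by linarith [(abs_le.mp h).1]) (abs_le.mp h).2
  · rw [fe_out h]; positivity

lemma fe_abs {e : ℝ} (he : 0 ≤ e) (x : ℝ) : |fe e x| ≤ e ^ 2 := by
  rw [abs_of_nonneg (fe_nonneg e x)]; exact fe_le he x

lemma fe_int {e : ℝ} (he : 0 ≤ e) : Integrable (fe e) := by
  unfold fe
  apply IntegrableOn.integrable_indicator _ (fe_set_meas e)
  have : {x : ℝ | |x| ≤ e} = Icc (-e) e := by ext x; simp [abs_le]
  rw [this]
  exact (by fun_prop : Continuous fun x : ℝ => x ^ 2).continuousOn.integrableOn_Icc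

lemma fe_diff1 {e : ℝ} (he : 0 ≤ e) (x y : ℝ) : |fe e (y + x) - fe e y| ≤ e ^ 2 := by
  rw [abs_le]
  constructor <;> linarith [fe_nonneg e y, fe_nonneg e (y + x), fe_le he y, fe_le he (y + x)]

/-- near-boundary indicator -/
def bd (e d y : ℝ) : ℝ := Set.indicator {y : ℝ | |(|y| - e)| ≤ d} (fun _ => (1:ℝ)) y

lemma bd_set_meas (e d : ℝ) : MeasurableSet {y : ℝ | |(|y| - e)| ≤ d} := measurableSet_le (by fun_prop) measurable_const

lemma bd_nonneg (e d y : ℝ) : 0 ≤ bd e d y := indicator_nonneg (fun _ _ => zero_le_one) y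
lemma bd_one {e d y : ℝ} (h : |(|y| - e)| ≤ d) : bd e d y = 1 := indicator_of_mem (by exact h) _

lemma bd_cross1 {e x y : ℝ} (h1 : |y| ≤ e) (h2 : ¬ |y + x| ≤ e) : bd e |x| y = 1 := by
  apply bd_one
  have := abs_add_le y x
  rw [abs_le]; constructor <;> linarith [abs_nonneg x]

lemma bd_cross2 {e x y : ℝ} (h1 : ¬ |y| ≤ e) (h2 : |y + x| ≤ e) : bd e |x| y = 1 := by
  apply bd_one
  have := abs_sub_abs_le_abs_sub y (y + x)
  rw [show y - (y + x) = -x by ring, abs_neg] at this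
  rw [abs_le]; constructor <;> linarith [abs_nonneg x]

lemma fe_diff2 {e : ℝ} (he : 0 ≤ e) (x y : ℝ) :
    |fe e (y + x) - fe e y| ≤ 2 * |x| * |y| + x ^ 2 + e ^ 2 * bd e |x| y := by
  have p1 : 0 ≤ 2 * |x| * |y| + x ^ 2 := by positivity
  have p2 : 0 ≤ e ^ 2 * bd e |x| y := mul_nonneg (by positivity) (bd_nonneg _ _ _)
  by_cases h1 : |y| ≤ e <;> by_cases h2 : |y + x| ≤ e
  · rw [fe_in h1, fe_in h2]
    have : (y + x) ^ 2 - y ^ 2 = 2 * x * y + x ^ 2 := by ring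
    rw [this]
    have := abs_add_le (2 * x * y) (x ^ 2)
    rw [abs_mul, abs_mul, abs_of_nonneg (sq_nonneg x), abs_of_pos (show (0:ℝ) < 2 by norm_num)] at this
    linarith
  · rw [bd_cross1 h1 h2]; linarith [fe_diff1 he x y]
  · rw [bd_cross2 h1 h2]; linarith [fe_diff1 he x y]
  · rw [fe_out h1, fe_out h2]; simp only [sub_zero, abs_zero]; linarith

lemma fe_diff3 {e : ℝ} (he : 0 ≤ e) {a : ℝ} (ha : |a| ≤ e / 4) (y : ℝ) :
    |fe e (y + a) - fe e y - 2 * a * {y : ℝ | |y| ≤ e}.indicator (fun y => y) y| ≤ a ^ 2 + 3 * e ^ 2 * bd e |a| y := by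
  have p2 : 0 ≤ 3 * e ^ 2 * bd e |a| y := mul_nonneg (by positivity) (bd_nonneg _ _ _)
  have p1 := sq_nonneg a
  by_cases h1 : |y| ≤ e <;> by_cases h2 : |y + a| ≤ e
  · rw [indicator_of_mem (by exact h1), fe_in h1, fe_in h2]
    have : (y + a) ^ 2 - y ^ 2 - 2 * a * y = a ^ 2 := by ring
    rw [this, abs_of_nonneg p1]
    linarith
  · rw [indicator_of_mem (by exact h1), bd_cross1 h1 h2]
    have h3 := abs_sub (fe e (y + a) - fe e y) (2 * a * y)
    rw [abs_mul, abs_mul, abs_of_pos (show (0:ℝ) < 2 by norm_num)] at h3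
    have h4 := fe_diff1 he a y
    have h5 : |a| * |y| ≤ e / 4 * e := by gcongr
    nlinarith
  · rw [indicator_of_notMem (by exact h1), bd_cross2 h1 h2, mul_zero, sub_zero]
    have h4 := fe_diff1 he a y
    nlinarith [sq_nonneg e]
  · rw [indicator_of_notMem (by exact h1), fe_out h1, fe_out h2]; simp only [sub_zero, mul_zero, abs_zero]; linarith

lemma fe_int_mu {e : ℝ} (he : 0 ≤ e) (μ : Measure ℝ) [IsProbabilityMeasure μ] (x : ℝ) :
    Integrable (fun y => fe e (y + x)) μ := by
  have := fe_meas e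
  exact (integrable_const (e ^ 2)).mono' (by apply Measurable.aestronglyMeasurable; fun_prop) (ae_of_all _ fun y => fe_abs he _)

lemma fe_int_mu0 {e : ℝ} (he : 0 ≤ e) (μ : Measure ℝ) [IsProbabilityMeasure μ] :
    Integrable (fun y => fe e y) μ := by
  simpa using fe_int_mu he μ 0

lemma bd_int (e d : ℝ) (μ : Measure ℝ) [IsProbabilityMeasure μ] :
    Integrable (fun y => bd e d y) μ ∧ ∫ y, bd e d y ∂μ = μ.real {y | |(|y| - e)| ≤ d} := by
  constructor
  · exact (integrable_const 1).indicator (bd_set_meas e d)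
  · unfold bd; rw [integral_indicator_const _ (bd_set_meas e d)]; simp

lemma x_bound {e C β : ℝ} (he : 0 < e) (hC : 0 ≤ C) (hβ : 0 ≤ β) (μ : Measure ℝ) [IsProbabilityMeasure μ]
    (hi : Integrable (fun y => |y|) μ) (h1 : ∫ y, |y| ∂μ ≤ C * e)
    (h2 : ∀ d, 0 ≤ d → d ≤ e / 4 → μ.real {y | |(|y| - e)| ≤ d} ≤ d * (C * β)) (x : ℝ) :
    |∫ y, fe e (y + x) ∂μ - ∫ y, fe e y ∂μ| ≤ ((2 * C + 4) * e + C * e ^ 2 * β) * min |x| (e / 4) := by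
  rw [← integral_sub (fe_int_mu he.le μ x) (fe_int_mu0 he.le μ)]
  have hp : 0 ≤ C * e ^ 2 * β := by positivity
  rcases le_total |x| (e / 4) with hx | hx
  · rw [min_eq_left hx]
    obtain ⟨b1, b2⟩ := bd_int e |x| μ
    have j1 : Integrable (fun y => 2 * |x| * |y| + x ^ 2) μ := (hi.const_mul (2 * |x|)).add (integrable_const _)
    have := norm_integral_le_of_norm_le (μ := μ) (f := fun y => fe e (y + x) - fe e y)
      (g := fun y => 2 * |x| * |y| + x ^ 2 + e ^ 2 * bd e |x| y) (j1.add (b1.const_mul (e ^ 2)))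
      (ae_of_all _ fun y => fe_diff2 he.le x y)
    rw [integral_add j1 (b1.const_mul (e ^ 2)), integral_add (hi.const_mul (2 * |x|)) (integrable_const _),
      integral_const_mul, integral_const_mul, b2] at this
    simp only [integral_const, probReal_univ, one_smul, Real.norm_eq_abs] at this
    refine this.trans ?_
    have k1 := mul_le_mul_of_nonneg_left h1 (show 0 ≤ 2 * |x| by positivity)
    have k2 := mul_le_mul_of_nonneg_left (h2 |x| (abs_nonneg x) hx) (show 0 ≤ e ^ 2 by positivity)
    have k3 : x ^ 2 ≤ |x| * e := by
      rw [← sq_abs, sq]; gcongr; linarith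
    have k4 : 0 ≤ |x| * e := by positivity
    nlinarith
  · rw [min_eq_right hx]
    have := norm_integral_le_of_norm_le (μ := μ) (f := fun y => fe e (y + x) - fe e y) (g := fun y => e ^ 2)
      (integrable_const _) (ae_of_all _ fun y => fe_diff1 he.le x y)
    simp only [integral_const, probReal_univ, one_smul, Real.norm_eq_abs] at this
    refine this.trans ?_
    have k4 : 0 ≤ C * e * e := by positivity
    have k5 : 0 ≤ C * e ^ 2 * β * e := by positivity
    nlinarith

lemma shift_bound {e C β a m : ℝ} (he : 0 < e) (ha : |a| ≤ e / 4) (μ : Measure ℝ) [IsProbabilityMeasure μ]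
    (hm : |∫ y, {y : ℝ | |y| ≤ e}.indicator (fun y => y) y ∂μ| ≤ m)
    (h2 : ∀ d, 0 ≤ d → d ≤ e / 4 → μ.real {y | |(|y| - e)| ≤ d} ≤ d * (C * β)) :
    |∫ y, fe e (y + a) ∂μ - ∫ y, fe e y ∂μ| ≤ 2 * |a| * m + a ^ 2 + 3 * e ^ 2 * (|a| * (C * β)) := by
  obtain ⟨b1, b2⟩ := bd_int e |a| μ
  have im : Integrable (fun y : ℝ => {y : ℝ | |y| ≤ e}.indicator (fun y => y) y) μ := by
    refine (integrable_const e).mono' (Measurable.aestronglyMeasurable (measurable_id.indicator (fe_set_meas e))) (ae_of_all _ fun y => ?_)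
    rw [indicator_apply]; split_ifs with h
    · exact h
    · simpa using he.le
  have := norm_integral_le_of_norm_le (μ := μ)
      (f := fun y => fe e (y + a) - fe e y - 2 * a * {y : ℝ | |y| ≤ e}.indicator (fun y => y) y)
      (g := fun y => a ^ 2 + 3 * e ^ 2 * bd e |a| y) ((integrable_const _).add (b1.const_mul (3 * e ^ 2)))
      (ae_of_all _ fun y => fe_diff3 he.le ha y)
  have jd : Integrable (fun y => fe e (y + a) - fe e y) μ := (fe_int_mu he.le μ a).sub (fe_int_mu0 he.le μ)
  rw [integral_sub jd (im.const_mul (2 * a)),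
    integral_sub (fe_int_mu he.le μ a) (fe_int_mu0 he.le μ), integral_const_mul,
    integral_add (integrable_const _) (b1.const_mul (3 * e ^ 2)), integral_const_mul, b2] at this
  simp only [integral_const, probReal_univ, one_smul, Real.norm_eq_abs] at this
  have k := mul_le_mul_of_nonneg_left (h2 |a| (abs_nonneg a) ha) (show 0 ≤ 3 * e ^ 2 by positivity)
  set I1 := ∫ y, {y : ℝ | |y| ≤ e}.indicator (fun y => y) y ∂μ
  set D := ∫ y, fe e (y + a) ∂μ - ∫ y, fe e y ∂μ
  have k2 : |D| ≤ |D - 2 * a * I1| + |2 * a * I1| := by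
    have := abs_add_le (D - 2 * a * I1) (2 * a * I1)
    rwa [sub_add_cancel] at this
  rw [abs_mul, abs_mul, abs_of_pos (show (0:ℝ) < 2 by norm_num)] at k2
  have k3 := mul_le_mul_of_nonneg_left hm (show 0 ≤ 2 * |a| by positivity)
  linarith

lemma stablePart_scale (Y Cp Cm : ℝ) {a : ℝ} (ha : 0 < a) (u : ℝ) :
    stablePart Y Cp Cm (a * u) = ((a ^ Y : ℝ) : ℂ) * stablePart Y Cp Cm u := by
  have hs : Real.sign (a * u) = Real.sign u := by
    rcases lt_trichotomy u 0 with h | h | h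
    · rw [Real.sign_of_neg h, Real.sign_of_neg (mul_neg_of_pos_of_neg ha h)]
    · simp [h]
    · rw [Real.sign_of_pos h, Real.sign_of_pos (mul_pos ha h)]
  unfold stablePart
  rw [hs, abs_mul, abs_of_pos ha, Real.mul_rpow ha.le (abs_nonneg u)]
  push_cast
  ring

lemma stablePart_meas (Y Cp Cm : ℝ) : Measurable (stablePart Y Cp Cm) := by
  have : Measurable Real.sign := by
    unfold Real.sign
    exact Measurable.ite (measurableSet_lt measurable_id measurable_const) measurable_const
      (Measurable.ite (measurableSet_lt measurable_const measurable_id) measurable_const measurable_const)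
  unfold stablePart
  fun_prop

lemma cf_eq (μ : Measure ℝ) (u : ℝ) : charFun μ u = ∫ x, Complex.exp (Complex.I * u * x) ∂μ := by
  rw [charFun_apply_real]
  congr 1; ext x; congr 1; ring

/-- the interpolating law -/
lemma lam_exists {Y Cp Cm σ c : ℝ} {κ : ℝ → ℝ} 
    (Jl : ℝ → Measure ℝ) (hJp : ∀ s, 0 < s → IsProbabilityMeasure (Jl s))
    (hJ : ∀ s, 0 < s → ∀ u, charFun (Jl s) u = Complex.exp (s * (Complex.I * c * u - stablePart Y Cp Cm u + chi κ u)))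
    (Tl : ℝ → Measure ℝ) (hTp : ∀ s, 0 < s → IsProbabilityMeasure (Tl s))
    (hT : ∀ s, 0 < s → ∀ u, charFun (Tl s) u = tildeCF σ Y Cp Cm s u)
    {h : ℝ} (hh : 0 < h) {t : ℝ} (ht : t ∈ Icc (0:ℝ) 1) :
    ∃ lam : Measure ℝ, IsProbabilityMeasure lam ∧ ∀ u, charFun lam u =
      Complex.exp ((-(h * stablePart Y Cp Cm u) - ((h ^ (1 - Y / 2) * σ ^ 2 * h * u ^ 2 / 2 : ℝ) : ℂ)) + t * (h * chi κ u)) := by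
  obtain ⟨ht0, ht1⟩ := ht
  -- jump factor
  have F1 : ∃ l1 : Measure ℝ, IsProbabilityMeasure l1 ∧ ∀ u, charFun l1 u =
      Complex.exp ((t * h : ℝ) * (- stablePart Y Cp Cm u + chi κ u)) := by
    rcases ht0.eq_or_lt with h0 | h0
    · refine ⟨Measure.dirac 0, inferInstance, fun u => ?_⟩
      rw [charFun_dirac, ← h0]; simp
    · have hs : 0 < t * h := by positivity
      have := hJp _ hs
      refine ⟨(Jl (t * h)).map (fun x => x + (-(c * (t * h)))), Measure.isProbabilityMeasure_map (by fun_prop), fun u => ?_⟩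
      rw [charFun_map_add_const, hJ _ hs, ← Complex.exp_add]
      congr 1
      simp
      ring
  have F2 : ∃ l2 : Measure ℝ, IsProbabilityMeasure l2 ∧ ∀ u, charFun l2 u =
      Complex.exp (-(((1 - t) * h : ℝ) * stablePart Y Cp Cm u) - (((1 - t) * h ^ (1 - Y / 2) * σ ^ 2 * h * u ^ 2 / 2 : ℝ) : ℂ)) := by
    rcases ht1.eq_or_lt with h1 | h1
    · refine ⟨Measure.dirac 0, inferInstance, fun u => ?_⟩
      rw [charFun_dirac, h1]; simp
    · have hs : 0 < (1 - t) * h ^ (1 - Y / 2) := by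
        have : 0 < 1 - t := by linarith
        positivity
      have := hTp _ hs
      have sh : 0 < Real.sqrt h := Real.sqrt_pos.mpr hh
      refine ⟨(Tl ((1 - t) * h ^ (1 - Y / 2))).map (fun x => Real.sqrt h * x), Measure.isProbabilityMeasure_map (by fun_prop), fun u => ?_⟩
      rw [charFun_map_mul, hT _ hs, tildeCF, stablePart_scale _ _ _ sh]
      congr 1
      have e1 : h ^ (1 - Y / 2) * Real.sqrt h ^ Y = h := by
        rw [Real.sqrt_eq_rpow, ← Real.rpow_mul hh.le, ← Real.rpow_add hh, show (1 - Y / 2 + 1 / 2 * Y : ℝ) = 1 by ring, Real.rpow_one]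
      have e2 : Real.sqrt h ^ 2 = h := Real.sq_sqrt hh.le
      have e3 : (((1 - t) * h ^ (1 - Y / 2) : ℝ) : ℂ) * (((Real.sqrt h ^ Y : ℝ) : ℂ) * stablePart Y Cp Cm u) =
          (((1 - t) * h : ℝ) : ℂ) * stablePart Y Cp Cm u := by
        rw [← mul_assoc, ← Complex.ofReal_mul, mul_assoc, e1]
      have e4 : (σ:ℂ) ^ 2 * ((Real.sqrt h * u : ℝ) : ℂ) ^ 2 * (((1 - t) * h ^ (1 - Y / 2) : ℝ) : ℂ) / 2 =
          (((1 - t) * h ^ (1 - Y / 2) * σ ^ 2 * h * u ^ 2 / 2 : ℝ) : ℂ) := by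
        norm_cast
        rw [mul_pow, e2]; ring
      rw [e3, e4]; ring
  obtain ⟨l1, p1, c1⟩ := F1
  obtain ⟨l2, p2, c2⟩ := F2
  have hv : 0 ≤ t * h ^ (1 - Y / 2) * σ ^ 2 * h := by positivity
  obtain ⟨w, hw⟩ : ∃ w : ℝ≥0, (w : ℝ) = t * h ^ (1 - Y / 2) * σ ^ 2 * h := ⟨⟨_, hv⟩, rfl⟩
  refine ⟨gaussianReal 0 w ∗ (l1 ∗ l2), inferInstance, fun u => ?_⟩
  rw [charFun_conv, charFun_conv, c1, c2, charFun_gaussianReal, ← Complex.exp_add, ← Complex.exp_add]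
  congr 1
  rw [hw]
  push_cast
  ring

/-- the combined rate -/
def rate (Y h e : ℝ) : ℝ :=
  h * (e ^ (2 - Y) * (e + e ^ 2 * ((Real.sqrt h)⁻¹ * (h / e ^ 2) ^ 3 + Real.sqrt h * e ^ (-Y))))
  + h * (h + (e * (h / e ^ 2) ^ 3 + h * e ^ (1 - Y)))
  + h * (e ^ 2 * ((Real.sqrt h)⁻¹ * (h / e ^ 2) ^ 3 + Real.sqrt h * e ^ (-Y)))

lemma alg_final {h e β θ E1 E2 C0 Cκ c k1 I3 : ℝ} (hh : 0 ≤ h) (he : 0 ≤ e) (hβ0 : 0 ≤ β) (hγ0 : 0 ≤ θ)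
    (hE1p : 0 ≤ E1) (hE2p : 0 ≤ E2) (hC0 : 0 ≤ C0) (hCκ : 0 ≤ Cκ) (M2 : I3 ≤ Cκ * E2) :
    2 * |c * h| * (|h * k1| + C0 * (e * θ + h * E1)) + (c * h) ^ 2 + 3 * e ^ 2 * (|c * h| * (C0 * β))
     + h * (((2 * C0 + 4) * e + C0 * e ^ 2 * β) * I3)
    ≤ (Cκ * (2 * C0 + 4) + 2 * |c| * (|k1| + C0) + c ^ 2 + 3 * |c| * C0) *
     (h * (E2 * (e + e ^ 2 * β)) + h * (h + (e * θ + h * E1)) + h * (e ^ 2 * β)) := by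
  set Ct := Cκ * (2 * C0 + 4) + 2 * |c| * (|k1| + C0) + c ^ 2 + 3 * |c| * C0 with hCt
  set A' := (2 * C0 + 4) * e + C0 * e ^ 2 * β with hA'
  have hA'0 : 0 ≤ A' := by positivity
  rw [abs_mul c h, abs_of_nonneg hh, abs_mul h k1, abs_of_nonneg hh]
  have s1 : h * (A' * I3) ≤ Cκ * (2 * C0 + 4) * (h * (E2 * (e + e ^ 2 * β))) := by
    calc h * (A' * I3) ≤ h * (A' * (Cκ * E2)) := by gcongr
      _ ≤ h * (((2 * C0 + 4) * (e + e ^ 2 * β)) * (Cκ * E2)) := by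
        gcongr
        rw [hA']
        have : 0 ≤ e ^ 2 * β := by positivity
        nlinarith
      _ = _ := by ring
  have s2 : 2 * (|c| * h) * (h * |k1| + C0 * (e * θ + h * E1)) ≤ 2 * |c| * (|k1| + C0) * (h * (h + (e * θ + h * E1))) := by
    have : 0 ≤ e * θ + h * E1 := by positivity
    set z := e * θ + h * E1
    have e1 : 2 * |c| * (|k1| + C0) * (h * (h + z)) - 2 * (|c| * h) * (h * |k1| + C0 * z) = 2 * |c| * h * (|k1| * z + C0 * h) := by ring
    have : 0 ≤ 2 * |c| * h * (|k1| * z + C0 * h) := by positivity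
    linarith
  have s3 : (c * h) ^ 2 ≤ c ^ 2 * (h * (h + (e * θ + h * E1))) := by
    have : 0 ≤ c ^ 2 * (h * (e * θ + h * E1)) := by positivity
    nlinarith
  have s4 : 3 * e ^ 2 * (|c| * h * (C0 * β)) = 3 * |c| * C0 * (h * (e ^ 2 * β)) := by ring
  set X1 := h * (E2 * (e + e ^ 2 * β))
  set X2 := h * (h + (e * θ + h * E1))
  set X3 := h * (e ^ 2 * β)
  have x1 : 0 ≤ X1 := by positivity
  have x2 : 0 ≤ X2 := by positivity
  have x3 : 0 ≤ X3 := by positivity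
  have y1 : Cκ * (2 * C0 + 4) * X1 ≤ Ct * X1 := by
    gcongr
    have : 0 ≤ 2 * |c| * (|k1| + C0) + c ^ 2 + 3 * |c| * C0 := by positivity
    rw [hCt]; linarith
  have y2 : (2 * |c| * (|k1| + C0) + c ^ 2) * X2 ≤ Ct * X2 := by
    gcongr
    have : 0 ≤ Cκ * (2 * C0 + 4) + 3 * |c| * C0 := by positivity
    rw [hCt]; linarith
  have y3 : (3 * |c| * C0) * X3 ≤ Ct * X3 := by
    gcongr
    have : 0 ≤ Cκ * (2 * C0 + 4) + 2 * |c| * (|k1| + C0) + c ^ 2 := by positivity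
    rw [hCt]; linarith
  linarith

set_option maxHeartbeats 1000000 in
lemma estimate {Y Cp Cm σ c k1 K1 Cκ : ℝ} {κ : ℝ → ℝ} {Sg : ℝ → ℂ} (hY1 : 1 < Y) (hY2 : Y < 2) (hσ : 0 < σ)
    (hκ : Measurable κ) (hκi : Integrable (fun x => |x| * |κ x|)) (hCκ : 0 ≤ Cκ)
    (hκm : ∀ e, 0 < e → e ≤ 1 → Integrable (fun x => |κ x| * min |x| e) ∧ ∫ x, |κ x| * min |x| e ≤ Cκ * e ^ (2 - Y))
    (hK1 : 0 ≤ K1) (hSP : ∀ u, ‖stablePart Y Cp Cm u‖ ≤ K1 * |u| ^ Y) (hSg : ∀ u, ‖Sg u‖ ≤ K1 * |u| ^ Y)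
    (hchi : ∀ u, chi κ u = Sg u + stablePart Y Cp Cm u + Complex.I * u * k1)
    (Jl : ℝ → Measure ℝ) (hJp : ∀ s, 0 < s → IsProbabilityMeasure (Jl s))
    (hJ : ∀ s, 0 < s → ∀ u, charFun (Jl s) u = Complex.exp (s * (Complex.I * c * u - stablePart Y Cp Cm u + chi κ u)))
    (Tl : ℝ → Measure ℝ) (hTp : ∀ s, 0 < s → IsProbabilityMeasure (Tl s))
    (hT : ∀ s, 0 < s → ∀ u, charFun (Tl s) u = tildeCF σ Y Cp Cm s u) :
    ∃ C, 0 ≤ C ∧ ∀ (h e : ℝ) (w : ℝ≥0), 0 < h → 0 < e → e ≤ 1 → h ≤ e ^ 2 → h ^ (1 - Y / 2) ≤ 1 / 2 →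
      |h * k1| ≤ e / 8 → |c * h| ≤ e / 4 → (w : ℝ) = σ ^ 2 * h →
      |∫ y, fe e y ∂(gaussianReal 0 w ∗ Jl h) - ∫ y, fe e y ∂(Tl h)| ≤ C * rate Y h e := by
  obtain ⟨C0, hC0, hpkg⟩ := pkg (K := K1 + σ ^ 2) hY1 hY2 (by positivity) hσ
  set Ct := Cκ * (2 * C0 + 4) + 2 * |c| * (|k1| + C0) + c ^ 2 + 3 * |c| * C0 with hCt
  refine ⟨Ct, by positivity, ?_⟩
  intro h e w hh he he1 hhe hθ hk1 hch hw
  set θ := h ^ (1 - Y / 2) with hθd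
  have hθ0 : 0 < θ := by positivity
  have hex : ∀ t : ℝ, ∃ lam : Measure ℝ, t ∈ Icc (0:ℝ) 1 → IsProbabilityMeasure lam ∧ ∀ u, charFun lam u =
      Complex.exp ((-(h * stablePart Y Cp Cm u) - ((h ^ (1 - Y / 2) * σ ^ 2 * h * u ^ 2 / 2 : ℝ) : ℂ)) + t * (h * chi κ u)) := by
    intro t
    by_cases ht : t ∈ Icc (0:ℝ) 1
    · obtain ⟨lam, hl⟩ := lam_exists Jl hJp hJ Tl hTp hT hh ht
      exact ⟨lam, fun _ => hl⟩
    · exact ⟨0, fun h' => absurd h' ht⟩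
  choose lam hlam using hex
  have hv0 : 0 < (1 - θ) * σ ^ 2 * h := by
    have : 0 < 1 - θ := by linarith
    positivity
  obtain ⟨v, hv⟩ : ∃ v : ℝ≥0, (v : ℝ) = (1 - θ) * σ ^ 2 * h := ⟨⟨_, hv0.le⟩, rfl⟩
  have hvne : v ≠ 0 := by
    intro h0
    rw [h0, NNReal.coe_zero] at hv
    linarith
  have hsh : 0 < σ ^ 2 * h := by positivity
  have hv1 : σ ^ 2 * h / 2 ≤ v := by rw [hv]; nlinarith
  have hv2 : v ≤ σ ^ 2 * h := by rw [hv]; nlinarith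
  set β := (Real.sqrt h)⁻¹ * (h / e ^ 2) ^ 3 + Real.sqrt h * e ^ (-Y) with hβ
  have hβ0 : 0 ≤ β := by positivity
  have P : ∀ t ∈ Icc (0:ℝ) 1, Integrable (fun y => |y|) (gaussianReal 0 v ∗ lam t) ∧
      ∫ y, |y| ∂(gaussianReal 0 v ∗ lam t) ≤ C0 * e ∧
      (∀ d, 0 ≤ d → d ≤ e / 4 → (gaussianReal 0 v ∗ lam t).real {y | |(|y| - e)| ≤ d} ≤ d * (C0 * β)) ∧
      |∫ y, {y : ℝ | |y| ≤ e}.indicator (fun y => y) y ∂(gaussianReal 0 v ∗ lam t)| ≤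
        |t * (h * k1)| + C0 * (e * (h / e ^ 2) ^ 3 + h * e ^ (1 - Y)) := by
    intro t ht
    obtain ⟨hp, hcf⟩ := hlam t ht
    refine hpkg h e (t * (h * k1)) v (lam t) (fun u => -((1 - t) * h * stablePart Y Cp Cm u) + t * h * Sg u
      - ((h ^ (1 - Y / 2) * σ ^ 2 * h * u ^ 2 / 2 : ℝ) : ℂ)) hp hh he he1 hhe hv1 hv2 ?_ ?_ ?_
    · rw [abs_mul, abs_of_nonneg ht.1]
      calc t * |h * k1| ≤ 1 * |h * k1| := by gcongr; exact ht.2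
        _ ≤ _ := by linarith
    · intro u
      rw [hcf, hchi]
      congr 1
      push_cast
      ring
    · intro u
      have e1 : h ^ (2 - Y / 2) = θ * h := by
        rw [hθd, show (2 - Y / 2 : ℝ) = (1 - Y / 2) + 1 by ring, Real.rpow_add hh, Real.rpow_one]
      have n1 : ‖(1 - t : ℂ)‖ = 1 - t := by
        rw [← Complex.ofReal_one, ← Complex.ofReal_sub, Complex.norm_real, Real.norm_of_nonneg (by linarith [ht.2])]
      have n2 : ‖(h : ℂ)‖ = h := by rw [Complex.norm_real, Real.norm_of_nonneg hh.le]
      have n3 : ‖(t : ℂ)‖ = t := by rw [Complex.norm_real, Real.norm_of_nonneg ht.1]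
      have t1 := norm_sub_le (-((1 - t) * h * stablePart Y Cp Cm u) + t * h * Sg u : ℂ) ((h ^ (1 - Y / 2) * σ ^ 2 * h * u ^ 2 / 2 : ℝ) : ℂ)
      have t2 := norm_add_le (-((1 - t) * h * stablePart Y Cp Cm u) : ℂ) (t * h * Sg u)
      rw [Complex.norm_real, Real.norm_of_nonneg (by positivity)] at t1
      rw [norm_neg, norm_mul, norm_mul, norm_mul, norm_mul, n1, n2, n3] at t2
      have t3 : (1 - t) * h * ‖stablePart Y Cp Cm u‖ ≤ (1 - t) * h * (K1 * |u| ^ Y) := by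
        have : 0 ≤ 1 - t := by linarith [ht.2]
        gcongr; exact hSP u
      have t4 : t * h * ‖Sg u‖ ≤ t * h * (K1 * |u| ^ Y) := by
        have := ht.1
        gcongr; exact hSg u
      rw [e1]
      have p1 : 0 ≤ σ ^ 2 * h * |u| ^ Y := by positivity
      have p2 : 0 ≤ K1 * (θ * h) * u ^ 2 := by positivity
      have p3 : 0 ≤ σ ^ 2 * (θ * h) * u ^ 2 := by positivity
      nlinarith
  -- first part
  set A' := (2 * C0 + 4) * e + C0 * e ^ 2 * β with hA'
  have hA'0 : 0 ≤ A' := by positivity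
  obtain ⟨km1, km2⟩ := hκm (e / 4) (by positivity) (by linarith)
  have hAm : Measurable (fun u : ℝ => -(h * stablePart Y Cp Cm u) - ((h ^ (1 - Y / 2) * σ ^ 2 * h * u ^ 2 / 2 : ℝ) : ℂ)) := by
    have := stablePart_meas Y Cp Cm
    fun_prop
  have hgeq : (fun x => |κ x| * (A' * min |x| (e / 4))) = fun x => A' * (|κ x| * min |x| (e / 4)) := by ext x; ring
  have M := main_bound (g := fun x => A' * min |x| (e / 4)) hvne (fe_meas e) (fe_int he.le) (fe_abs he.le) hκ hκi hAm hh.le lam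
    (fun t ht => (hlam t ht).1) (fun t ht u => (hlam t ht).2 u)
    (fun t ht x => by
      have := (hlam t ht).1
      obtain ⟨q1, q2, q3, _⟩ := P t ht
      exact x_bound he hC0 hβ0 _ q1 q2 q3 x) (by rw [hgeq]; exact km1.const_mul A')
  rw [hgeq, integral_const_mul] at M
  have M2 : ∫ x, |κ x| * min |x| (e / 4) ≤ Cκ * e ^ (2 - Y) := by
    refine km2.trans ?_
    gcongr
    · linarith
  obtain ⟨pr0, cf0⟩ := hlam 0 (by simp)
  obtain ⟨pr1, cf1⟩ := hlam 1 (by simp)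
  have hprJ := hJp h hh
  have hprT := hTp h hh
  have id0 : gaussianReal 0 v ∗ lam 0 = Tl h := by
    apply Measure.ext_of_charFun
    ext u
    rw [charFun_conv, cf0, hT h hh, charFun_gaussianReal, tildeCF, ← Complex.exp_add, hv]
    congr 1
    push_cast
    ring
  have id1 : gaussianReal 0 w ∗ Jl h = (gaussianReal 0 v ∗ lam 1).map (fun x => x + c * h) := by
    have : IsProbabilityMeasure ((gaussianReal 0 v ∗ lam 1).map (fun x => x + c * h)) := Measure.isProbabilityMeasure_map (by fun_prop)
    apply Measure.ext_of_charFun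
    ext u
    rw [charFun_map_add_const, charFun_conv, charFun_conv, cf1, hJ h hh, charFun_gaussianReal, charFun_gaussianReal, ← Complex.exp_add, ← Complex.exp_add, ← Complex.exp_add, hv, hw]
    congr 1
    simp
    ring
  obtain ⟨_, _, q3, q4⟩ := P 1 (by simp)
  have S := shift_bound he hch (gaussianReal 0 v ∗ lam 1) q4 q3
  rw [id1, integral_map (by fun_prop) (fe_meas e).aestronglyMeasurable, ← id0]
  refine (abs_sub_le _ (∫ y, fe e y ∂(gaussianReal 0 v ∗ lam 1)) _).trans ((add_le_add S M).trans ?_)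
  rw [one_mul]
  exact alg_final (θ := (h / e ^ 2) ^ 3) hh.le he.le hβ0 (by positivity) (by positivity) (by positivity) hC0 hCκ M2

lemma rate_le {Y h e δ : ℝ} (hY1 : 1 < Y) (hY2 : Y < 2) (hh : 0 < h) (he : 0 < e) (he1 : e ≤ 1) (hhe : h ≤ e ^ 2)
    (hδ : 0 < δ) :
    rate Y h e ≤ 3 * (h ^ 3 * e ^ (-Y - 2) + h ^ ((3 : ℝ) / 2) * e ^ (1 - Y / 2) + h ^ 2 * e ^ (2 - 2 * Y)
      + h ^ (1 - δ) * e ^ (3 - Y + δ * Y)) := by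
  have mono : ∀ a b : ℝ, b ≤ a → e ^ a ≤ e ^ b := fun a b hab => Real.rpow_le_rpow_of_exponent_ge he he1 hab
  have hs : 0 < Real.sqrt h := Real.sqrt_pos.2 hh
  have hss : Real.sqrt h * Real.sqrt h = h := Real.mul_self_sqrt hh.le
  have hse : Real.sqrt h ≤ e := by
    rw [show e = Real.sqrt (e ^ 2) by rw [Real.sqrt_sq he.le]]
    exact Real.sqrt_le_sqrt hhe
  set s := Real.sqrt h with hsd
  have hE2 : e ^ (2 - Y) ≤ 1 := Real.rpow_le_one he.le he1 (by linarith)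
  have T1 : h * (e ^ (2 - Y) * e) ≤ h ^ (1 - δ) * e ^ (3 - Y + δ * Y) := by
    have a1 : h = h ^ (1 - δ) * h ^ δ := by rw [← Real.rpow_add hh]; simp
    have a2 : e ^ (2 - Y) * e = e ^ (3 - Y) := by
      conv_lhs => rw [← Real.rpow_one e]
      rw [Real.rpow_one, ← Real.rpow_add_one he.ne']; congr 1; ring
    have a3 : e ^ (3 - Y + δ * Y) = e ^ (3 - Y) * (e ^ Y) ^ δ := by
      rw [← Real.rpow_mul he.le, ← Real.rpow_add he]; congr 1; ring
    have a4 : h ≤ e ^ Y := by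
      refine hhe.trans ?_
      rw [← Real.rpow_natCast e 2]
      exact mono _ _ (by push_cast; linarith)
    have a5 : h ^ δ ≤ (e ^ Y) ^ δ := Real.rpow_le_rpow hh.le a4 hδ.le
    rw [a2, a3]
    calc h * e ^ (3 - Y) = h ^ (1 - δ) * (e ^ (3 - Y) * h ^ δ) := by nth_rewrite 1 [a1]; ring
      _ ≤ _ := by gcongr
  have T3 : h * h ≤ h ^ 2 * e ^ (2 - 2 * Y) := by
    have : e ^ (0:ℝ) ≤ e ^ (2 - 2 * Y) := mono _ _ (by linarith)
    rw [Real.rpow_zero] at this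
    nlinarith [sq_nonneg h]
  have T5 : h * (h * e ^ (1 - Y)) ≤ h ^ 2 * e ^ (2 - 2 * Y) := by
    have : e ^ (1 - Y) ≤ e ^ (2 - 2 * Y) := mono _ _ (by linarith)
    rw [← mul_assoc, ← sq]; gcongr
  have e3 : (e ^ 3)⁻¹ ≤ e ^ (-Y - 2) := by
    rw [← Real.rpow_natCast, ← Real.rpow_neg he.le]
    exact mono _ _ (by push_cast; linarith)
  have T4 : h * (e * (h / e ^ 2) ^ 3) ≤ h ^ 3 * e ^ (-Y - 2) := by
    calc h * (e * (h / e ^ 2) ^ 3) = h ^ 3 * (h * (e ^ 5)⁻¹) := by field_simp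
      _ ≤ h ^ 3 * (e ^ 2 * (e ^ 5)⁻¹) := by gcongr
      _ = h ^ 3 * (e ^ 3)⁻¹ := by field_simp
      _ ≤ _ := by gcongr
  have T6 : h * (e ^ 2 * (s⁻¹ * (h / e ^ 2) ^ 3)) ≤ h ^ 3 * e ^ (-Y - 2) := by
    calc h * (e ^ 2 * (s⁻¹ * (h / e ^ 2) ^ 3)) = h ^ 3 * ((s * s) * s⁻¹ * (e ^ 4)⁻¹) := by rw [hss]; field_simp
      _ = h ^ 3 * (s * (e ^ 4)⁻¹) := by field_simp
      _ ≤ h ^ 3 * (e * (e ^ 4)⁻¹) := by gcongr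
      _ = h ^ 3 * (e ^ 3)⁻¹ := by field_simp
      _ ≤ _ := by gcongr
  have T7 : h * (e ^ 2 * (s * e ^ (-Y))) ≤ h ^ ((3 : ℝ) / 2) * e ^ (1 - Y / 2) := by
    have a1 : h ^ ((3 : ℝ) / 2) = h * s := by
      rw [hsd, Real.sqrt_eq_rpow, show (3 / 2 : ℝ) = 1 / 2 + 1 by norm_num, Real.rpow_add_one hh.ne', mul_comm]
    have a2 : e ^ 2 * e ^ (-Y) = e ^ (2 - Y) := by
      rw [← Real.rpow_natCast e 2, ← Real.rpow_add he]; congr 1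
    rw [a1]
    calc h * (e ^ 2 * (s * e ^ (-Y))) = h * s * (e ^ 2 * e ^ (-Y)) := by ring
      _ ≤ h * s * e ^ (1 - Y / 2) := by rw [a2]; gcongr h * s * ?_; exact mono _ _ (by linarith)
  have T8 : h * (e ^ (2 - Y) * (e ^ 2 * (s⁻¹ * (h / e ^ 2) ^ 3 + s * e ^ (-Y)))) ≤ h * (e ^ 2 * (s⁻¹ * (h / e ^ 2) ^ 3 + s * e ^ (-Y))) := by
    have : 0 ≤ e ^ 2 * (s⁻¹ * (h / e ^ 2) ^ 3 + s * e ^ (-Y)) := by positivity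
    have := mul_le_mul_of_nonneg_right hE2 this
    rw [one_mul] at this
    gcongr
  have eq : rate Y h e = h * (e ^ (2 - Y) * e) + h * (e ^ (2 - Y) * (e ^ 2 * (s⁻¹ * (h / e ^ 2) ^ 3 + s * e ^ (-Y))))
     + h * h + h * (e * (h / e ^ 2) ^ 3) + h * (h * e ^ (1 - Y)) + h * (e ^ 2 * (s⁻¹ * (h / e ^ 2) ^ 3 + s * e ^ (-Y))) := by
    rw [rate]; ring
  have eq2 : h * (e ^ 2 * (s⁻¹ * (h / e ^ 2) ^ 3 + s * e ^ (-Y))) = h * (e ^ 2 * (s⁻¹ * (h / e ^ 2) ^ 3)) + h * (e ^ 2 * (s * e ^ (-Y))) := by ring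
  have p1 : 0 ≤ h ^ ((3 : ℝ) / 2) * e ^ (1 - Y / 2) := by positivity
  have p2 : 0 ≤ h ^ 2 * e ^ (2 - 2 * Y) := by positivity
  have p3 : 0 ≤ h ^ (1 - δ) * e ^ (3 - Y + δ * Y) := by positivity
  rw [eq]
  linarith

/-- splitting a bounded quantity proportionally -/
lemma split_bigO {l : Filter ℝ} {D g1 S : ℝ → ℝ} {C : ℝ} (hC : 0 ≤ C)
    (hev : ∀ᶠ h in l, 0 < S h ∧ 0 ≤ g1 h ∧ |D h| ≤ C * S h) :
    (fun h => D h * (g1 h / S h)) =O[l] g1 := by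
  refine IsBigO.of_bound C ?_
  filter_upwards [hev] with h hh
  obtain ⟨hS, hg, hD⟩ := hh
  rw [Real.norm_eq_abs, Real.norm_eq_abs, abs_mul, abs_div, abs_of_pos hS, abs_of_nonneg hg]
  calc |D h| * (g1 h / S h) ≤ (C * S h) * (g1 h / S h) := by gcongr
    _ = C * g1 h := by field_simp

/-- Proposition B.2: the difference between the truncated second moments of
`X_h = σ√h·W + J_h` and of `X̃_h` decomposes into six explicit big-O remainders. -/
theorem truncated_second_moment_difference
    {Ω : Type*} [MeasurableSpace Ω] (P : Measure Ω) [IsProbabilityMeasure P]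
    (Y Cp Cm σ b : ℝ) (q : ℝ → ℝ)
    (hY1 : 1 < Y) (hY2 : Y < 2)
    (hCp : 0 < Cp) (hCm : 0 < Cm) (hσ : 0 < σ)
    (hq_meas : Measurable q) (hq_nonneg : ∀ x, 0 ≤ q x)
    (hq_bdd : ∃ M : ℝ, ∀ x, q x ≤ M)
    (hq_lim : Tendsto q (𝓝[≠] (0 : ℝ)) (𝓝 1))
    (hq_taylor : ∃ αp αm : ℝ, αp ≠ 0 ∧ αm ≠ 0 ∧
      IntegrableOn (fun x => |q x - 1 - αp * x| * x ^ (-Y - 1)) (Set.Ioc (0 : ℝ) 1) ∧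
      IntegrableOn (fun x => |q x - 1 - αm * x| * |x| ^ (-Y - 1)) (Set.Ico (-1 : ℝ) 0))
    (hq_log : ∃ K M : ℝ, ∀ x : ℝ, M ≤ |x| → |Real.log (q x)| ≤ K * |x|)
    (hq_inf : ∀ ε : ℝ, 0 < ε → ∃ c : ℝ, 0 < c ∧ ∀ x : ℝ, x ≠ 0 → |x| < ε → c ≤ q x)
    (hq_sq : IntegrableOn (fun x => q x ^ 2 * |x| ^ (-1 - Y)) {x : ℝ | 1 < |x|})
    -- the jump part `J` and the Brownian part `W`
    (J : ℝ → Ω → ℝ) (W : Ω → ℝ)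
    (hWmeas : Measurable W) (hW : P.map W = gaussianReal 0 1)
    (hJmeas : ∀ h : ℝ, Measurable (J h))
    (hJcf : ∀ h : ℝ, 0 < h → ∀ u : ℝ,
      ∫ ω, Complex.exp (Complex.I * u * J h ω) ∂P = Complex.exp (h * psiJ b Y Cp Cm q u))
    (hindep : ∀ h : ℝ, 0 < h → IndepFun W (J h) P)
    -- the law `μtilde h` of `X̃_h`
    (μtilde : ℝ → Measure ℝ)
    (hμt : ∀ h : ℝ, 0 < h → IsProbabilityMeasure (μtilde h))
    (hμtcf : ∀ h : ℝ, 0 < h → ∀ u : ℝ,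
      ∫ x, Complex.exp (Complex.I * u * x) ∂(μtilde h) = tildeCF σ Y Cp Cm h u)
    -- the threshold `ε = ε(h)`
    (ε : ℝ → ℝ) (hεpos : ∀ h : ℝ, 0 < h → 0 < ε h)
    (hε0 : Tendsto ε (𝓝[>] (0 : ℝ)) (𝓝 0))
    (hεsqrt : Tendsto (fun h => ε h / Real.sqrt h) (𝓝[>] (0 : ℝ)) atTop) :
    ∃ δ₀ : ℝ, 0 < δ₀ ∧ ∀ δ : ℝ, 0 < δ → δ < δ₀ →
      ∃ R₁ R₂ R₃ R₄ R₅ R₆ : ℝ → ℝ,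
        (∀ h : ℝ, 0 < h →
          (∫ ω, Set.indicator {x : ℝ | |x| ≤ ε h} (fun x => x ^ 2)
              (σ * Real.sqrt h * W ω + J h ω) ∂P)
            - (∫ x, Set.indicator {x : ℝ | |x| ≤ ε h} (fun x => x ^ 2) x ∂(μtilde h))
          = R₁ h + R₂ h + R₃ h + R₄ h + R₅ h + R₆ h) ∧
        R₁ =O[𝓝[>] (0 : ℝ)] (fun h => h ^ 3 * ε h ^ (-Y - 2)) ∧
        R₂ =O[𝓝[>] (0 : ℝ)] (fun h => h ^ ((3 : ℝ) / 2) * ε h ^ (1 - Y / 2)) ∧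
        R₃ =O[𝓝[>] (0 : ℝ)] (fun h => h ^ 2 * ε h ^ (2 - 2 * Y)) ∧
        R₄ =O[𝓝[>] (0 : ℝ)] (fun h => h ^ (1 - δ) * ε h ^ (3 - Y + δ * Y)) ∧
        R₅ =O[𝓝[>] (0 : ℝ)]
          (fun h => Real.sqrt h * ε h * Real.exp (-(ε h ^ 2) / (2 * σ ^ 2 * h))) ∧
        R₆ =O[𝓝[>] (0 : ℝ)]
          (fun h => Real.sqrt h * ε h ^ (3 - Y) * Real.exp (-(ε h ^ 2) / (8 * σ ^ 2 * h))) := by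
  obtain ⟨M, hM⟩ := hq_bdd
  obtain ⟨αp, αm, -, -, hp, hm⟩ := hq_taylor
  obtain ⟨r, C0, hr, hri, hC0, hb1, hb2⟩ := kap_dom hY1 hCp hCm hq_nonneg hM hp hm
  have hκ := kap_meas Y Cp Cm hq_meas
  have hM0 : 0 ≤ M := (hq_nonneg 0).trans (hM 0)
  have hκi : Integrable (fun x => |x| * |kap Y Cp Cm q x|) := by
    refine (hri.add ((integrable_of_abs (f := fun x => min x 1 * x ^ (-Y)) (aux_w_int hY1 hY2)).const_mul C0)).mono'
      (Measurable.aestronglyMeasurable (by fun_prop)) (ae_of_all _ fun x => ?_)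
    rw [Real.norm_of_nonneg (by positivity)]
    exact hb2 x
  obtain ⟨Cκ, hCκ, hκm⟩ := kap_min hY1 hY2 hκ hr hri hC0 hb1
  set k1 : ℝ := ∫ x, x * kap Y Cp Cm q x with hk1
  set c : ℝ := mdrift b Y Cp Cm q - k1 with hc
  set I0 : ℝ := ∫ x, ‖kern 1 x‖ * |x| ^ (-1 - Y) with hI0
  have hI0p : 0 ≤ I0 := integral_nonneg fun x => by positivity
  set Sg : ℝ → ℂ := fun u => ∫ x, kern u x * (levyDensity Y Cp Cm q x : ℂ) with hSgd
  set K1 := ((Cp + Cm) * M) * I0 + ((Cp + Cm) * 1) * I0 with hK1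
  have hSg : ∀ u, ‖Sg u‖ ≤ K1 * |u| ^ Y := fun u =>
    (kern_dens_bound hY1 hY2 (levyDensity_bound hCp hCm hq_nonneg hM) u).trans (by
      gcongr
      rw [hK1]
      have : 0 ≤ ((Cp + Cm) * 1) * I0 := by positivity
      linarith)
  have hSP : ∀ u, ‖stablePart Y Cp Cm u‖ ≤ K1 * |u| ^ Y := fun u => by
    have := kern_dens_bound hY1 hY2 (levyDensity_bound (Y := Y) hCp hCm (q := fun _ => 1) (by simp) (M := 1) (by simp)) u
    rw [stable_kern hY1 hY2 hCp hCm, norm_neg] at this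
    refine this.trans ?_
    gcongr
    rw [hK1]
    have : 0 ≤ ((Cp + Cm) * M) * I0 := by positivity
    linarith
  have hchi : ∀ u, chi (kap Y Cp Cm q) u = Sg u + stablePart Y Cp Cm u + Complex.I * u * k1 := fun u => by
    have := kern_s hY1 hY2 hCp hCm hq_meas hκi u
    simp only [hSgd]
    rw [this]
    ring
  have hJ : ∀ s, 0 < s → ∀ u, charFun (P.map (J s)) u =
      Complex.exp (s * (Complex.I * c * u - stablePart Y Cp Cm u + chi (kap Y Cp Cm q) u)) := by
    intro s hs u
    rw [cf_eq, integral_map (hJmeas s).aemeasurable (Measurable.aestronglyMeasurable (by fun_prop)), hJcf s hs,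
      psiJ_kern hY1 hY2 hCp hCm hq_meas hq_nonneg hM, kern_s hY1 hY2 hCp hCm hq_meas hκi, ← hk1, hc]
    congr 1
    push_cast
    ring
  obtain ⟨C, hC, hest⟩ := estimate hY1 hY2 hσ hκ hκi hCκ hκm (by positivity : 0 ≤ K1) hSP hSg hchi
    (fun s => P.map (J s)) (fun s _ => Measure.isProbabilityMeasure_map (hJmeas s).aemeasurable) hJ
    μtilde hμt (fun s hs u => by rw [cf_eq, hμtcf s hs])
  have hlaw : ∀ h, 0 < h → ∀ w : ℝ≥0, (w : ℝ) = σ ^ 2 * h →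
      ∫ ω, fe (ε h) (σ * Real.sqrt h * W ω + J h ω) ∂P = ∫ y, fe (ε h) y ∂(gaussianReal 0 w ∗ P.map (J h)) := by
    intro h hh w hw
    have hWm : Measurable (fun ω => σ * Real.sqrt h * W ω) := by fun_prop
    have hind : IndepFun (fun ω => σ * Real.sqrt h * W ω) (J h) P :=
      (hindep h hh).comp (φ := fun x => σ * Real.sqrt h * x) (ψ := id) (by fun_prop) measurable_id
    have h1 : P.map (fun ω => σ * Real.sqrt h * W ω) = gaussianReal 0 w := by
      rw [show (fun ω => σ * Real.sqrt h * W ω) = (fun x => σ * Real.sqrt h * x) ∘ W from rfl,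
        ← Measure.map_map (by fun_prop) hWmeas, hW, gaussianReal_map_const_mul]
      congr 1
      · simp
      · ext
        simp only [mul_one, NNReal.coe_mk, hw]
        rw [mul_pow, Real.sq_sqrt hh.le]
    have h2 := hind.map_add_eq_map_conv_map hWm (hJmeas h)
    rw [← h1, ← h2, integral_map (by fun_prop) (fe_meas _).aestronglyMeasurable]
    rfl
  set D : ℝ → ℝ := fun h => (∫ ω, Set.indicator {x : ℝ | |x| ≤ ε h} (fun x => x ^ 2)
              (σ * Real.sqrt h * W ω + J h ω) ∂P)
            - (∫ x, Set.indicator {x : ℝ | |x| ≤ ε h} (fun x => x ^ 2) x ∂(μtilde h)) with hD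
  have hpos : ∀ᶠ h in 𝓝[>] (0:ℝ), 0 < h := eventually_mem_nhdsWithin
  have hev : ∀ᶠ h in 𝓝[>] (0:ℝ), 0 < h ∧ 0 < ε h ∧ ε h ≤ 1 ∧ h ≤ ε h ^ 2 ∧ |D h| ≤ C * rate Y h (ε h) := by
    have e1 : ∀ᶠ h in 𝓝[>] (0:ℝ), ε h ≤ 1 := hε0.eventually (eventually_le_nhds one_pos)
    have e2 := hεsqrt.eventually_ge_atTop (1 + 8 * |k1| + 4 * |c|)
    have t3 : Tendsto (fun h : ℝ => h ^ (1 - Y / 2)) (𝓝[>] 0) (𝓝 0) := by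
      have : Tendsto (fun h : ℝ => h ^ (1 - Y / 2)) (𝓝 0) (𝓝 ((0:ℝ) ^ (1 - Y / 2))) :=
        (Real.continuousAt_rpow_const 0 (1 - Y / 2) (Or.inr (by linarith))).tendsto
      rw [Real.zero_rpow (by linarith)] at this
      exact this.mono_left nhdsWithin_le_nhds
    have e3 : ∀ᶠ h in 𝓝[>] (0:ℝ), h ^ (1 - Y / 2) ≤ 1 / 2 := t3.eventually (eventually_le_nhds (by norm_num))
    filter_upwards [hpos, e1, e2, e3] with h hh he1 he2 he3
    have he := hεpos h hh
    have hs : 0 < Real.sqrt h := Real.sqrt_pos.2 hh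
    have hss : Real.sqrt h * Real.sqrt h = h := Real.mul_self_sqrt hh.le
    rw [le_div_iff₀ hs] at he2
    have k0 : 0 ≤ |k1| := abs_nonneg _
    have c0 : 0 ≤ |c| := abs_nonneg _
    have hse : Real.sqrt h ≤ ε h := by nlinarith [mul_nonneg k0 hs.le, mul_nonneg c0 hs.le]
    have hhe : h ≤ ε h ^ 2 := by nlinarith
    have hhs : h ≤ Real.sqrt h := by nlinarith
    have b1 : |h * k1| ≤ ε h / 8 := by
      rw [abs_mul, abs_of_pos hh]
      nlinarith [mul_nonneg k0 hs.le, mul_nonneg c0 hs.le, mul_le_mul_of_nonneg_right hhs k0]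
    have b2 : |c * h| ≤ ε h / 4 := by
      rw [abs_mul, abs_of_pos hh]
      nlinarith [mul_nonneg k0 hs.le, mul_nonneg c0 hs.le, mul_le_mul_of_nonneg_right hhs c0]
    refine ⟨hh, he, he1, hhe, ?_⟩
    obtain ⟨w, hw⟩ : ∃ w : ℝ≥0, (w : ℝ) = σ ^ 2 * h := ⟨⟨_, by positivity⟩, rfl⟩
    have := hest h (ε h) w hh he he1 hhe he3 b1 b2 hw
    rw [← hlaw h hh w hw] at this
    exact this
  refine ⟨1, one_pos, fun δ hδ hδ1 => ?_⟩
  set g1 : ℝ → ℝ := fun h => h ^ 3 * ε h ^ (-Y - 2) with hg1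
  set g2 : ℝ → ℝ := fun h => h ^ ((3 : ℝ) / 2) * ε h ^ (1 - Y / 2) with hg2
  set g3 : ℝ → ℝ := fun h => h ^ 2 * ε h ^ (2 - 2 * Y) with hg3
  set g4 : ℝ → ℝ := fun h => h ^ (1 - δ) * ε h ^ (3 - Y + δ * Y) with hg4
  set S : ℝ → ℝ := fun h => g1 h + g2 h + g3 h + g4 h with hS
  have gp : ∀ h, 0 < h → 0 < g1 h ∧ 0 < g2 h ∧ 0 < g3 h ∧ 0 < g4 h := by
    intro h hh
    have he := hεpos h hh
    refine ⟨?_, ?_, ?_, ?_⟩ <;> simp only [hg1, hg2, hg3, hg4] <;> positivity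
  have hSp : ∀ h, 0 < h → 0 < S h := fun h hh => by
    obtain ⟨a1, a2, a3, a4⟩ := gp h hh
    simp only [hS]; positivity
  have hDS : ∀ᶠ h in 𝓝[>] (0:ℝ), 0 < h ∧ |D h| ≤ (C * 3) * S h := by
    filter_upwards [hev] with h hh
    obtain ⟨h0, he, he1, hhe, hb⟩ := hh
    refine ⟨h0, hb.trans ?_⟩
    rw [mul_assoc]
    exact mul_le_mul_of_nonneg_left (rate_le hY1 hY2 h0 he he1 hhe hδ) hC
  have hC3 : 0 ≤ C * 3 := by positivity
  refine ⟨fun h => D h * (g1 h / S h), fun h => D h * (g2 h / S h), fun h => D h * (g3 h / S h),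
    fun h => D h * (g4 h / S h), fun _ => 0, fun _ => 0, ?_, ?_, ?_, ?_, ?_, isBigO_zero _ _, isBigO_zero _ _⟩
  · intro h hh
    have hs := (hSp h hh).ne'
    change D h = _
    rw [add_zero, add_zero, ← mul_add, ← mul_add, ← mul_add, ← add_div, ← add_div, ← add_div]
    rw [show (g1 h + g2 h + g3 h + g4 h) / S h = 1 from div_self hs, mul_one]
  · exact split_bigO hC3 (hDS.mono fun h hh => ⟨hSp h hh.1, (gp h hh.1).1.le, hh.2⟩)
  · exact split_bigO hC3 (hDS.mono fun h hh => ⟨hSp h hh.1, (gp h hh.1).2.1.le, hh.2⟩)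
  · exact split_bigO hC3 (hDS.mono fun h hh => ⟨hSp h hh.1, (gp h hh.1).2.2.1.le, hh.2⟩)
  · exact split_bigO hC3 (hDS.mono fun h hh => ⟨hSp h hh.1, (gp h hh.1).2.2.2.le, hh.2⟩)

end
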